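/- arXiv:2510.09929 — 4 statements merged into one kernel-verified Lean document; each statement's English description precedes it below -/
import Mathlib

section
/- Let h : ℝ^n → ℝ be continuous and α be a class K function. Then h is a viscosity CBF with respect to α if and only if the function x ↦ max{0, h(x)} is a viscosity CBF with respect to α. -/
open Set Filter MeasureTheory Topology

noncomputable section

/-- `α : [0,∞) → [0,∞)` is a class `K` function: continuous, strictly increasing, `α 0 = 0`. -/
def IsClassK (α : ℝ → ℝ) : Prop :=
  ContinuousOn α (Set.Ici 0) ∧ StrictMonoOn α (Set.Ici 0) ∧ α 0 = 0

/-- `h` is a viscosity CBF with respect to `α`: for every `x` with `h x > 0` and every `C¹`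
test function `φ` such that `h - φ` has a local maximum at `x`, one has
`max_{u ∈ U} ∇φ(x) · f(x,u) ≥ -α (h x)`. -/
def IsViscosityCBF {n m : ℕ} (f : (Fin n → ℝ) → (Fin m → ℝ) → Fin n → ℝ)
    (U : Set (Fin m → ℝ)) (α : ℝ → ℝ) (h : (Fin n → ℝ) → ℝ) : Prop :=
  Continuous h ∧
    ∀ x : Fin n → ℝ, 0 < h x →
      ∀ φ : (Fin n → ℝ) → ℝ, ContDiff ℝ 1 φ →
        IsLocalMax (fun y => h y - φ y) x →
        -α (h x) ≤ sSup ((fun u => fderiv ℝ φ x (f x u)) '' U)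

/-- `h` is a viscosity CBF w.r.t. `α` iff `max {0, h}` is. -/
theorem isViscosityCBF_iff_max_zero {n m : ℕ}
    (f : (Fin n → ℝ) → (Fin m → ℝ) → Fin n → ℝ) (U : Set (Fin m → ℝ))
    (hU : IsCompact U)
    (hf : ∃ K : NNReal, LipschitzOnWith K (Function.uncurry f) (Set.univ ×ˢ U))
    (α : ℝ → ℝ) (hα : IsClassK α)
    (h : (Fin n → ℝ) → ℝ) (hh : Continuous h) :
    IsViscosityCBF f U α h ↔ IsViscosityCBF f U α (fun x => max 0 (h x)) := by
  have key : ∀ x, 0 < h x → ∀ φ : (Fin n → ℝ) → ℝ,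
      (fun y => h y - φ y) =ᶠ[𝓝 x] (fun y => max 0 (h y) - φ y) := by
    intro x hx φ
    filter_upwards [hh.continuousAt.eventually (lt_mem_nhds hx)] with y hy
    rw [max_eq_right (le_of_lt hy)]
  constructor
  · rintro ⟨_, H⟩
    refine ⟨continuous_const.max hh, ?_⟩
    intro x hx φ hφ hmax
    have hx' : 0 < h x := by simpa using hx
    have e : max 0 (h x) = h x := max_eq_right hx'.le
    have := H x hx' φ hφ (((key x hx' φ).isLocalMax_iff).2 hmax)
    simpa only [e] using this
  · rintro ⟨_, H⟩
    refine ⟨hh, ?_⟩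
    intro x hx' φ hφ hmax
    have e : max 0 (h x) = h x := max_eq_right hx'.le
    have := H x (by simpa using hx') φ hφ (((key x hx' φ).isLocalMax_iff).1 hmax)
    simpa only [e] using this
end
end

section
/- Let g : ℝ^n → [0,∞) be continuous and α be a locally Lipschitz class K function. Then the control barrier value function v corresponding to g and α is continuous on ℝ^n × [0,∞), satisfies v(·,0) = g, and is a viscosity solution on ℝ^n × (0,∞) of the HJ-PDE max{ ∂_T v − H_α(x, v, ∇v), v − g(x) } = 0; moreover it is the unique continuous function ℝ^n × [0,∞) → [0,∞) with these properties. -/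
open Set Filter MeasureTheory Topology

noncomputable section

/-- `α` is a locally Lipschitz class `K` function on `[0,∞)`. -/
def IsLocallyLipschitzClassK (α : ℝ → ℝ) : Prop :=
  IsClassK α ∧
    ∀ x ∈ Set.Ici (0 : ℝ), ∃ K : NNReal, ∃ s ∈ nhdsWithin x (Set.Ici (0 : ℝ)),
      LipschitzOnWith K α s

/-- `β` is the function `β_α`: for each `r ≥ 0`, `t ↦ β r t` solves `y' = -α y`, `y 0 = r`,
staying in `[0, r]` for all `t ≥ 0`. -/
def IsBetaFor (α : ℝ → ℝ) (β : ℝ → ℝ → ℝ) : Prop :=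
  ∀ r : ℝ, 0 ≤ r →
    β r 0 = r ∧ ∀ t : ℝ, 0 ≤ t →
      0 ≤ β r t ∧ β r t ≤ r ∧ HasDerivWithinAt (β r) (-α (β r t)) (Set.Ici 0) t

/-- `u` is an admissible control signal: measurable, valued in `U` on `[0,∞)`. -/
def IsControl {m : ℕ} (U : Set (Fin m → ℝ)) (u : ℝ → Fin m → ℝ) : Prop :=
  Measurable u ∧ ∀ t : ℝ, 0 ≤ t → u t ∈ U

/-- `ξ` is an admissible trajectory from `x` under the control signal `u`. -/
def IsTrajectory {n m : ℕ} (f : (Fin n → ℝ) → (Fin m → ℝ) → Fin n → ℝ)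
    (x : Fin n → ℝ) (u : ℝ → Fin m → ℝ) (ξ : ℝ → Fin n → ℝ) : Prop :=
  Continuous ξ ∧ ∀ t : ℝ, 0 ≤ t → ξ t = x + ∫ s in (0 : ℝ)..t, f (ξ s) (u s)

/-- The anti-discounted payoff defining the CB-VF: the supremum over control signals `u`
and admissible trajectories `ξ` from `x` of `min_{t ∈ [0,T]} β_α (g (ξ t)) (T - t)`. -/
def cbvfPayoff {n m : ℕ} (f : (Fin n → ℝ) → (Fin m → ℝ) → Fin n → ℝ)
    (U : Set (Fin m → ℝ)) (β : ℝ → ℝ → ℝ) (g : (Fin n → ℝ) → ℝ)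
    (x : Fin n → ℝ) (T : ℝ) : ℝ :=
  sSup {y : ℝ | ∃ u ξ, IsControl U u ∧ IsTrajectory f x u ξ ∧
    y = sInf ((fun t => β (g (ξ t)) (T - t)) '' Set.Icc 0 T)}

/-- `v` is a viscosity solution on `ℝⁿ × (0,∞)` of the HJ-PDE
`max { ∂_T v - H_α(x, v, ∇v), v - g x } = 0`, where
`H_α(x,r,λ) = max_{u ∈ U} λ · f(x,u) + α r`. -/
def IsViscositySolnCBVF {n m : ℕ} (f : (Fin n → ℝ) → (Fin m → ℝ) → Fin n → ℝ)
    (U : Set (Fin m → ℝ)) (α : ℝ → ℝ) (g : (Fin n → ℝ) → ℝ)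
    (v : (Fin n → ℝ) × ℝ → ℝ) : Prop :=
  (∀ p : (Fin n → ℝ) × ℝ, 0 < p.2 →
    ∀ φ : (Fin n → ℝ) × ℝ → ℝ, ContDiff ℝ 1 φ →
      IsLocalMax (fun q => v q - φ q) p →
      max (fderiv ℝ φ p ((0, 1) : (Fin n → ℝ) × ℝ) -
          (sSup ((fun u => fderiv ℝ φ p (f p.1 u, 0)) '' U) + α (v p)))
        (v p - g p.1) ≤ 0) ∧
  (∀ p : (Fin n → ℝ) × ℝ, 0 < p.2 →
    ∀ φ : (Fin n → ℝ) × ℝ → ℝ, ContDiff ℝ 1 φ →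
      IsLocalMin (fun q => v q - φ q) p →
      0 ≤ max (fderiv ℝ φ p ((0, 1) : (Fin n → ℝ) × ℝ) -
          (sSup ((fun u => fderiv ℝ φ p (f p.1 u, 0)) '' U) + α (v p)))
        (v p - g p.1))


/-! ### Facts about `β` -/

lemma alpha_lip {α : ℝ → ℝ} (hα : IsLocallyLipschitzClassK α) (r : ℝ) :
    ∃ K : NNReal, LipschitzOnWith K α (Icc 0 r) := by
  have h : LocallyLipschitzOn (Ici (0:ℝ)) α := fun x hx => hα.2 x hx
  exact (h.mono Icc_subset_Ici_self).exists_lipschitzOnWith_of_compact isCompact_Icc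

lemma beta_cont {α : ℝ → ℝ} {β : ℝ → ℝ → ℝ} (hβ : IsBetaFor α β) {r : ℝ} (hr : 0 ≤ r) :
    ContinuousOn (β r) (Ici 0) := fun t ht => ((hβ r hr).2 t ht).2.2.continuousWithinAt

lemma beta_semigroup {α : ℝ → ℝ} {β : ℝ → ℝ → ℝ} (hα : IsLocallyLipschitzClassK α)
    (hβ : IsBetaFor α β) {r s t : ℝ} (hr : 0 ≤ r) (hs : 0 ≤ s) (ht : 0 ≤ t) :
    β (β r s) t = β r (s + t) := by
  obtain ⟨K, hK⟩ := alpha_lip hα r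
  have hrs := ((hβ r hr).2 s hs)
  have hlip : LipschitzOnWith K (fun y => -α y) (Icc 0 r) := hK.neg
  have hshift : ∀ τ : ℝ, 0 ≤ τ →
      HasDerivWithinAt (fun τ => β r (s + τ)) (-α (β r (s + τ))) (Ici 0) τ := by
    intro τ hτ
    have h1 := ((hβ r hr).2 (s + τ) (by linarith)).2.2
    have h2 : HasDerivWithinAt (fun τ : ℝ => s + τ) 1 (Ici 0) τ :=
      ((hasDerivAt_id τ).const_add s).hasDerivWithinAt
    have h3 := HasDerivWithinAt.comp τ h1 h2 (fun x (hx : 0 ≤ x) => by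
      show (0:ℝ) ≤ s + x
      linarith)
    rw [mul_one] at h3
    exact h3
  refine ODE_solution_unique_of_mem_Icc_right (v := fun _ y => -α y) (s := fun _ => Icc 0 r)
    (f := β (β r s)) (g := fun τ => β r (s + τ)) (a := 0) (b := t) (fun _ _ => hlip)
    ((beta_cont hβ hrs.1).mono Icc_subset_Ici_self) ?_ ?_ ?_ ?_ ?_ ?_ (right_mem_Icc.2 ht)
  · intro τ hτ
    exact (((hβ _ hrs.1).2 τ hτ.1).2.2).mono (Ici_subset_Ici.2 hτ.1)
  · intro τ hτ
    have := (hβ _ hrs.1).2 τ hτ.1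
    exact ⟨this.1, this.2.1.trans hrs.2.1⟩
  · intro τ hτ
    exact ((hshift τ hτ.1).continuousWithinAt).mono Icc_subset_Ici_self
  · intro τ hτ
    exact (hshift τ hτ.1).mono (Ici_subset_Ici.2 hτ.1)
  · intro τ hτ
    have := (hβ r hr).2 (s + τ) (by linarith [hτ.1])
    exact ⟨this.1, this.2.1⟩
  · simp [(hβ _ hrs.1).1]

lemma beta_strict {α : ℝ → ℝ} {β : ℝ → ℝ → ℝ} (hα : IsLocallyLipschitzClassK α)
    (hβ : IsBetaFor α β) {r r' t : ℝ} (hr : 0 ≤ r) (hrr : r < r') (ht : 0 ≤ t) :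
    β r t < β r' t := by
  have hr' : 0 ≤ r' := hr.trans hrr.le
  by_contra hcon
  push Not at hcon
  have hc : ContinuousOn (fun s => β r' s - β r s) (Icc 0 t) :=
    ((beta_cont hβ hr').sub (beta_cont hβ hr)).mono Icc_subset_Ici_self
  have h0 : (0:ℝ) ∈ Icc (β r' t - β r t) (β r' 0 - β r 0) := by
    rw [(hβ r hr).1, (hβ r' hr').1]
    constructor <;> linarith
  obtain ⟨t0, ht0, hz⟩ := intermediate_value_Icc' ht hc h0
  obtain ⟨K, hK⟩ := alpha_lip hα r'
  have hlip : LipschitzOnWith K (fun y => -α y) (Icc 0 r') := hK.neg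
  have key : ∀ ρ, 0 ≤ ρ → ρ ≤ r' → ∀ τ ∈ Ioc 0 t0,
      HasDerivWithinAt (β ρ) (-α (β ρ τ)) (Iic τ) τ ∧ β ρ τ ∈ Icc 0 r' := by
    intro ρ hρ hρ' τ hτ
    have h := (hβ ρ hρ).2 τ hτ.1.le
    exact ⟨(h.2.2.hasDerivAt (Ici_mem_nhds hτ.1)).hasDerivWithinAt, h.1, h.2.1.trans hρ'⟩
  have := ODE_solution_unique_of_mem_Icc_left (v := fun _ y => -α y) (s := fun _ => Icc 0 r')
    (f := β r') (g := β r) (a := 0) (b := t0) (fun _ _ => hlip)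
    ((beta_cont hβ hr').mono Icc_subset_Ici_self) (fun τ hτ => (key r' hr' le_rfl τ hτ).1)
    (fun τ hτ => (key r' hr' le_rfl τ hτ).2)
    ((beta_cont hβ hr).mono Icc_subset_Ici_self) (fun τ hτ => (key r hr hrr.le τ hτ).1)
    (fun τ hτ => (key r hr hrr.le τ hτ).2) (by linarith)
    (left_mem_Icc.2 ht0.1)
  rw [(hβ r hr).1, (hβ r' hr').1] at this
  linarith

lemma beta_mono {α : ℝ → ℝ} {β : ℝ → ℝ → ℝ} (hα : IsLocallyLipschitzClassK α)
    (hβ : IsBetaFor α β) {r r' t : ℝ} (hr : 0 ≤ r) (hrr : r ≤ r') (ht : 0 ≤ t) :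
    β r t ≤ β r' t := by
  rcases hrr.eq_or_lt with h | h
  · rw [h]
  · exact (beta_strict hα hβ hr h ht).le

lemma beta_anti {α : ℝ → ℝ} {β : ℝ → ℝ → ℝ} (hα : IsLocallyLipschitzClassK α)
    (hβ : IsBetaFor α β) {r s t : ℝ} (hr : 0 ≤ r) (hs : 0 ≤ s) (hst : s ≤ t) :
    β r t ≤ β r s := by
  have h := beta_semigroup hα hβ hr hs (sub_nonneg.2 hst)
  rw [add_sub_cancel] at h
  rw [← h]
  have hrs := (hβ r hr).2 s hs
  exact ((hβ _ hrs.1).2 _ (sub_nonneg.2 hst)).2.1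

lemma alpha_mono {α : ℝ → ℝ} (hα : IsLocallyLipschitzClassK α) {r s : ℝ} (hr : 0 ≤ r)
    (h : r ≤ s) : α r ≤ α s := hα.1.2.1.monotoneOn hr (hr.trans h) h

/-- Bounds for `β r h` by freezing the slope. -/
lemma beta_bounds {α : ℝ → ℝ} {β : ℝ → ℝ → ℝ} (hα : IsLocallyLipschitzClassK α)
    (hβ : IsBetaFor α β) {r h : ℝ} (hr : 0 ≤ r) (hh : 0 < h) :
    r - h * α r ≤ β r h ∧ β r h ≤ r - h * α (β r h) := by
  obtain ⟨c, hc, hc'⟩ := exists_hasDerivAt_eq_slope (β r) (fun t => -α (β r t)) hh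
    ((beta_cont hβ hr).mono Icc_subset_Ici_self)
    (fun x hx => ((hβ r hr).2 x hx.1.le).2.2.hasDerivAt (Ici_mem_nhds hx.1))
  rw [(hβ r hr).1, sub_zero, eq_div_iff hh.ne'] at hc'
  have hb := (hβ r hr).2 c hc.1.le
  have h1 := alpha_mono hα hb.1 hb.2.1
  have h2 := alpha_mono hα ((hβ r hr).2 h hh.le).1 (beta_anti hα hβ hr hc.1.le hc.2.le)
  constructor <;> nlinarith


/-! ### Facts about trajectories -/

lemma gronwall_int {a : ℝ → ℝ} (ha : Continuous a) {δ K T : ℝ} (hK : 0 ≤ K)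
    (h : ∀ t ∈ Icc 0 T, a t ≤ δ + K * ∫ s in (0:ℝ)..t, a s) :
    ∀ t ∈ Icc 0 T, a t ≤ δ * Real.exp (K * t) := by
  intro t ht
  have hA : ∀ τ, HasDerivAt (fun τ => δ + K * ∫ s in (0:ℝ)..τ, a s) (K * a τ) τ := fun τ =>
    ((ha.integral_hasStrictDerivAt 0 τ).hasDerivAt.const_mul K).const_add δ
  have hE : ∀ τ, HasDerivAt (fun τ => Real.exp (-(K * τ))) (Real.exp (-(K * τ)) * (-K)) τ := by
    intro τ
    have := ((hasDerivAt_id τ).const_mul K).neg.exp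
    simpa using this
  have hB := fun τ => (hE τ).mul (hA τ)
  have hanti : AntitoneOn ((fun τ => Real.exp (-(K * τ))) *
      (fun τ => δ + K * ∫ s in (0:ℝ)..τ, a s)) (Icc 0 T) := by
    refine antitoneOn_of_deriv_nonpos (convex_Icc 0 T)
      (fun τ _ => (hB τ).continuousAt.continuousWithinAt)
      (fun τ _ => (hB τ).differentiableAt.differentiableWithinAt) ?_
    intro τ hτ
    rw [interior_Icc] at hτ
    rw [(hB τ).deriv]
    have h1 := h τ ⟨hτ.1.le, hτ.2.le⟩
    have h2 := Real.exp_pos (-(K * τ))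
    have h3 : K * a τ - K * (δ + K * ∫ s in (0:ℝ)..τ, a s) ≤ 0 := by
      rw [← mul_sub]
      exact mul_nonpos_of_nonneg_of_nonpos hK (by linarith)
    nlinarith
  have h1 := hanti ⟨le_rfl, ht.1.trans ht.2⟩ ht ht.1
  simp only [Pi.mul_apply, mul_zero, neg_zero, Real.exp_zero, intervalIntegral.integral_same,
    add_zero, one_mul] at h1
  have h2 := h t ht
  have h3 : Real.exp (K * t) * Real.exp (-(K * t)) = 1 := by
    rw [← Real.exp_add]; simp
  have h4 := mul_le_mul_of_nonneg_left h1 (Real.exp_pos (K * t)).le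
  rw [← mul_assoc, h3, one_mul] at h4
  linarith

section Traj

variable {n m : ℕ} {f : (Fin n → ℝ) → (Fin m → ℝ) → Fin n → ℝ} {U : Set (Fin m → ℝ)} {K : NNReal}

lemma f_lip (hf : LipschitzWith K (Function.uncurry f)) (x y : Fin n → ℝ) (u : Fin m → ℝ) :
    ‖f x u - f y u‖ ≤ K * ‖x - y‖ := by
  have := hf.dist_le_mul (x, u) (y, u)
  simpa [dist_eq_norm, Prod.norm_def] using this

lemma f_bound (hU : IsCompact U) (hf : LipschitzWith K (Function.uncurry f)) :
    ∃ C : ℝ, 0 ≤ C ∧ ∀ u ∈ U, ∀ x, ‖f x u‖ ≤ C + K * ‖x‖ := by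
  have hc : Continuous (fun u => f 0 u) :=
    hf.continuous.comp (continuous_const.prodMk continuous_id)
  obtain ⟨C, hC⟩ := hU.exists_bound_of_continuousOn hc.continuousOn
  refine ⟨max C 0, le_max_right _ _, fun u hu x => ?_⟩
  have h1 := f_lip hf x 0 u
  have h2 := hC u hu
  have h3 := norm_add_le (f x u - f 0 u) (f 0 u)
  rw [sub_add_cancel] at h3
  rw [sub_zero] at h1
  linarith [le_max_left C 0]

lemma int_cont (hU : IsCompact U) (hf : LipschitzWith K (Function.uncurry f))
    {u : ℝ → Fin m → ℝ} (hu : IsControl U u) {ξ : ℝ → Fin n → ℝ} (hξ : Continuous ξ)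
    {a b : ℝ} (ha : 0 ≤ a) (hb : 0 ≤ b) :
    IntervalIntegrable (fun s => f (ξ s) (u s)) volume a b := by
  obtain ⟨C, hC0, hC⟩ := f_bound hU hf
  have hmeas : Measurable (fun s => f (ξ s) (u s)) :=
    hf.continuous.measurable.comp (hξ.measurable.prodMk hu.1)
  have hg : IntervalIntegrable (fun s => C + K * ‖ξ s‖) volume a b :=
    (by fun_prop : Continuous (fun s => C + K * ‖ξ s‖)).intervalIntegrable a b
  refine hg.mono_fun' hmeas.aestronglyMeasurable ?_
  refine (ae_restrict_iff' measurableSet_uIoc).2 (Eventually.of_forall fun s hs => ?_)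
  refine hC _ (hu.2 s ?_) _
  have : min a b < s := hs.1
  exact (le_min ha hb).trans this.le

lemma exp_weight {n : ℕ} {F : ℝ → Fin n → ℝ} {B L τ : ℝ} (hL : 1 ≤ L) (hτ : 0 ≤ τ) (hB : 0 ≤ B)
    (hF : ∀ s, 0 ≤ s → ‖F s‖ ≤ B * Real.exp (L * s)) :
    Real.exp (-(L * τ)) * ‖∫ s in (0:ℝ)..τ, F s‖ ≤ B / L := by
  have hL0 : 0 < L := by linarith
  have h1 : ‖∫ s in (0:ℝ)..τ, F s‖ ≤ ∫ s in (0:ℝ)..τ, B * Real.exp (L * s) := by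
    refine intervalIntegral.norm_integral_le_of_norm_le hτ ?_ ?_
    · exact Eventually.of_forall fun s hs => hF s hs.1.le
    · exact (by fun_prop : Continuous (fun s => B * Real.exp (L * s))).intervalIntegrable _ _
  have h2 : ∫ s in (0:ℝ)..τ, B * Real.exp (L * s) = B / L * Real.exp (L * τ) - B / L := by
    rw [intervalIntegral.integral_eq_sub_of_hasDerivAt (f := fun s => B / L * Real.exp (L * s))]
    · simp
    · intro s _
      have := (((hasDerivAt_id s).const_mul L).exp).const_mul (B / L)
      refine this.congr_deriv ?_
      simp only [id]
      field_simp
    · exact (by fun_prop : Continuous (fun s => B * Real.exp (L * s))).intervalIntegrable _ _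
  rw [h2] at h1
  have h3 : Real.exp (-(L * τ)) * Real.exp (L * τ) = 1 := by
    rw [← Real.exp_add]; simp
  have h4 := mul_le_mul_of_nonneg_left h1 (Real.exp_pos (-(L * τ))).le
  have h5 : 0 ≤ Real.exp (-(L * τ)) * (B / L) := by positivity
  calc _ ≤ _ := h4
    _ = B / L * (Real.exp (-(L * τ)) * Real.exp (L * τ)) - Real.exp (-(L * τ)) * (B / L) := by ring
    _ ≤ B / L := by rw [h3]; linarith

lemma traj_exists (hU : IsCompact U) (hf : LipschitzWith K (Function.uncurry f))
    {u : ℝ → Fin m → ℝ} (hu : IsControl U u) (x : Fin n → ℝ) :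
    ∃ ξ, IsTrajectory f x u ξ := by
  obtain ⟨C, hC0, hC⟩ := f_bound hU hf
  set L : ℝ := K + 1 with hLdef
  have hL1 : 1 ≤ L := by simp [hLdef]
  have hL0 : 0 < L := by linarith
  let w : ℝ → Fin m → ℝ := fun s => u (max s 0)
  have hwU : ∀ s, w s ∈ U := fun s => hu.2 _ (le_max_right _ _)
  have hwm : Measurable w := hu.1.comp (by fun_prop)
  let X := BoundedContinuousFunction ℝ (Fin n → ℝ)
  let G : X → ℝ → Fin n → ℝ := fun η s => f (Real.exp (L * s) • η s) (w s)
  have hGm : ∀ η, Measurable (G η) := fun η =>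
    hf.continuous.measurable.comp
      (Measurable.prodMk ((by fun_prop : Continuous fun s => Real.exp (L * s) • η s)).measurable hwm)
  have hGb : ∀ (η : X) s, ‖G η s‖ ≤ C + K * (Real.exp (L * s) * ‖η‖) := by
    intro η s
    refine (hC _ (hwU s) _).trans ?_
    rw [norm_smul, Real.norm_of_nonneg (Real.exp_pos _).le]
    have := η.norm_coe_le_norm s
    gcongr
  have hGi : ∀ (η : X) a b, IntervalIntegrable (G η) volume a b := by
    intro η a b
    refine IntervalIntegrable.mono_fun' (g := fun s => C + K * (Real.exp (L * s) * ‖η‖))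
      ((by fun_prop : Continuous _).intervalIntegrable a b) (hGm η).aestronglyMeasurable ?_
    exact Eventually.of_forall (hGb η)
  let Ψ : X → ℝ → Fin n → ℝ := fun η t =>
    Real.exp (-(L * max t 0)) • (x + ∫ s in (0:ℝ)..(max t 0), G η s)
  have hΨc : ∀ η, Continuous (Ψ η) := by
    intro η
    have h1 := intervalIntegral.continuous_primitive (hGi η) 0
    have h2 : Continuous fun t : ℝ => ∫ s in (0:ℝ)..(max t 0), G η s :=
      h1.comp (by fun_prop : Continuous fun t : ℝ => max t 0)
    exact (by fun_prop : Continuous fun t : ℝ => Real.exp (-(L * max t 0))).smul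
      (continuous_const.add h2)
  have hΨb : ∀ η t, ‖Ψ η t‖ ≤ ‖x‖ + (C + K * ‖η‖) / L := by
    intro η t
    have ht : (0:ℝ) ≤ max t 0 := le_max_right _ _
    have h1 : Real.exp (-(L * max t 0)) * ‖∫ s in (0:ℝ)..(max t 0), G η s‖ ≤ (C + K * ‖η‖) / L := by
      refine exp_weight hL1 ht (by positivity) fun s hs => (hGb η s).trans ?_
      have : 1 ≤ Real.exp (L * s) := Real.one_le_exp (by positivity)
      nlinarith
    have h2 : Real.exp (-(L * max t 0)) ≤ 1 := Real.exp_le_one_iff.2 (by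
      have := mul_nonneg hL0.le ht
      linarith)
    simp only [Ψ]
    rw [norm_smul, Real.norm_of_nonneg (Real.exp_pos _).le]
    have h3 := norm_add_le x (∫ s in (0:ℝ)..(max t 0), G η s)
    have h4 := mul_le_mul_of_nonneg_left h3 (Real.exp_pos (-(L * max t 0))).le
    have h5 := mul_le_mul_of_nonneg_right h2 (norm_nonneg x)
    linarith
  let Φ : X → X := fun η => BoundedContinuousFunction.ofNormedAddCommGroup (Ψ η) (hΨc η) _ (hΨb η)
  have hΦ : ∀ η t, Φ η t = Ψ η t := fun η t => rfl
  obtain ⟨q, hq⟩ : ∃ q : NNReal, (q : ℝ) = K / L := ⟨K / (K + 1), by simp [hLdef]⟩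
  have hcontr : ContractingWith q Φ := by
    constructor
    · rw [← NNReal.coe_lt_coe, hq, NNReal.coe_one, div_lt_one hL0]
      simp [hLdef]
    · refine LipschitzWith.of_dist_le_mul fun η ζ => ?_
      rw [hq]
      refine (BoundedContinuousFunction.dist_le (by positivity)).2 fun t => ?_
      rw [hΦ, hΦ, dist_eq_norm]
      simp only [Ψ]
      rw [← smul_sub, add_sub_add_left_eq_sub, norm_smul, Real.norm_of_nonneg (Real.exp_pos _).le,
        ← intervalIntegral.integral_sub (hGi η _ _) (hGi ζ _ _)]
      have := exp_weight (F := fun s => G η s - G ζ s) (B := K * dist η ζ) hL1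
        (le_max_right t 0) (by positivity) (fun s hs => by
          refine (f_lip hf _ _ _).trans ?_
          rw [← smul_sub, norm_smul, Real.norm_of_nonneg (Real.exp_pos _).le]
          have h1 : ‖η s - ζ s‖ ≤ dist η ζ := by
            rw [← dist_eq_norm]; exact BoundedContinuousFunction.dist_coe_le_dist s
          have h2 : Real.exp (L * s) * ‖η s - ζ s‖ ≤ Real.exp (L * s) * dist η ζ := by gcongr
          calc (K:ℝ) * (Real.exp (L * s) * ‖η s - ζ s‖) ≤ K * (Real.exp (L * s) * dist η ζ) := by
                gcongr
            _ = _ := by ring)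
      refine this.trans (le_of_eq ?_)
      ring
  have : Nonempty X := ⟨0⟩
  obtain ⟨η, hη⟩ : ∃ η, Φ η = η := ⟨_, hcontr.fixedPoint_isFixedPt⟩
  refine ⟨fun t => Real.exp (L * max t 0) • η t, ?_, ?_⟩
  · exact (by fun_prop : Continuous fun t => Real.exp (L * max t 0) • η t)
  · intro t ht
    have h1 : η t = Ψ η t := by rw [← hΦ, hη]
    have h2 : Real.exp (L * t) * Real.exp (-(L * t)) = 1 := by
      rw [← Real.exp_add]; simp
    show Real.exp (L * max t 0) • η t =
      x + ∫ s in (0:ℝ)..t, f (Real.exp (L * max s 0) • η s) (u s)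
    rw [h1]
    simp only [Ψ, max_eq_left ht, smul_smul, h2, one_smul]
    congr 1
    refine intervalIntegral.integral_congr fun s hs => ?_
    rw [uIcc_of_le ht] at hs
    simp only [G, w, max_eq_left hs.1]

lemma traj_zero {x : Fin n → ℝ} {u : ℝ → Fin m → ℝ} {ξ : ℝ → Fin n → ℝ}
    (h : IsTrajectory f x u ξ) : ξ 0 = x := by
  simpa using h.2 0 le_rfl

lemma traj_sub (hU : IsCompact U) (hf : LipschitzWith K (Function.uncurry f))
    {x : Fin n → ℝ} {u : ℝ → Fin m → ℝ} {ξ : ℝ → Fin n → ℝ} (hu : IsControl U u)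
    (h : IsTrajectory f x u ξ) {s t : ℝ} (hs : 0 ≤ s) (ht : 0 ≤ t) :
    ξ t - ξ s = ∫ τ in s..t, f (ξ τ) (u τ) := by
  rw [h.2 t ht, h.2 s hs, add_sub_add_left_eq_sub,
    intervalIntegral.integral_interval_sub_left (int_cont hU hf hu h.1 le_rfl ht)
      (int_cont hU hf hu h.1 le_rfl hs)]

lemma traj_dist (hU : IsCompact U) (hf : LipschitzWith K (Function.uncurry f))
    {x y : Fin n → ℝ} {u : ℝ → Fin m → ℝ} {ξ η : ℝ → Fin n → ℝ} (hu : IsControl U u)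
    (hξ : IsTrajectory f x u ξ) (hη : IsTrajectory f y u η) {t : ℝ} (ht : 0 ≤ t) :
    ‖ξ t - η t‖ ≤ ‖x - y‖ * Real.exp (K * t) := by
  have hc : Continuous fun t => ‖ξ t - η t‖ := (hξ.1.sub hη.1).norm
  refine gronwall_int (T := t) hc (NNReal.coe_nonneg K) ?_ t ⟨ht, le_rfl⟩
  intro τ hτ
  have h1 : ξ τ - η τ = (x - y) + ∫ s in (0:ℝ)..τ, (f (ξ s) (u s) - f (η s) (u s)) := by
    rw [intervalIntegral.integral_sub (int_cont hU hf hu hξ.1 le_rfl hτ.1)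
      (int_cont hU hf hu hη.1 le_rfl hτ.1), hξ.2 τ hτ.1, hη.2 τ hτ.1]
    abel
  have h2 : ‖∫ s in (0:ℝ)..τ, (f (ξ s) (u s) - f (η s) (u s))‖ ≤
      ∫ s in (0:ℝ)..τ, K * ‖ξ s - η s‖ :=
    intervalIntegral.norm_integral_le_of_norm_le hτ.1
      (Eventually.of_forall fun s _ => f_lip hf _ _ _)
      ((continuous_const.mul hc).intervalIntegrable _ _)
  rw [intervalIntegral.integral_const_mul] at h2
  rw [h1]
  exact (norm_add_le _ _).trans (by simpa using h2)

lemma traj_bound (hU : IsCompact U) (hf : LipschitzWith K (Function.uncurry f))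
    {C : ℝ} (hC0 : 0 ≤ C) (hC : ∀ u ∈ U, ∀ x, ‖f x u‖ ≤ C + K * ‖x‖)
    {x : Fin n → ℝ} {u : ℝ → Fin m → ℝ} {ξ : ℝ → Fin n → ℝ} (hu : IsControl U u)
    (hξ : IsTrajectory f x u ξ) {t T : ℝ} (ht : 0 ≤ t) (hT : t ≤ T) :
    ‖ξ t‖ ≤ (‖x‖ + C * T) * Real.exp (K * T) := by
  have hc : Continuous fun t => ‖ξ t‖ := hξ.1.norm
  have := gronwall_int (T := T) (δ := ‖x‖ + C * T) hc (NNReal.coe_nonneg K) ?_ t ⟨ht, hT⟩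
  · refine this.trans ?_
    have : 0 ≤ T := ht.trans hT
    gcongr
  intro τ hτ
  have h2 : ‖∫ s in (0:ℝ)..τ, f (ξ s) (u s)‖ ≤
      ∫ s in (0:ℝ)..τ, (C + K * ‖ξ s‖) :=
    intervalIntegral.norm_integral_le_of_norm_le hτ.1
      (Eventually.of_forall fun s hs => hC _ (hu.2 s hs.1.le) _)
      ((continuous_const.add (continuous_const.mul hc)).intervalIntegrable _ _)
  rw [intervalIntegral.integral_add (continuous_const.intervalIntegrable _ _)
    ((by fun_prop : Continuous fun s => (K:ℝ) * ‖ξ s‖).intervalIntegrable _ _),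
    intervalIntegral.integral_const_mul] at h2
  simp only [intervalIntegral.integral_const, sub_zero, smul_eq_mul] at h2
  rw [hξ.2 τ hτ.1]
  refine (norm_add_le _ _).trans ?_
  have h3 : τ * C ≤ C * T := by nlinarith [hτ.2]
  linarith

lemma traj_incr (hU : IsCompact U) (hf : LipschitzWith K (Function.uncurry f))
    {M : ℝ} {x : Fin n → ℝ} {u : ℝ → Fin m → ℝ} {ξ : ℝ → Fin n → ℝ} (hu : IsControl U u)
    (hξ : IsTrajectory f x u ξ) {s t : ℝ} (hs : 0 ≤ s) (ht : s ≤ t)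
    (hM : ∀ τ ∈ Ioc s t, ‖f (ξ τ) (u τ)‖ ≤ M) :
    ‖ξ t - ξ s‖ ≤ M * (t - s) := by
  rw [traj_sub hU hf hu hξ hs (hs.trans ht)]
  have := intervalIntegral.norm_integral_le_of_norm_le_const (a := s) (b := t) (C := M)
    (f := fun τ => f (ξ τ) (u τ)) (by rw [uIoc_of_le ht]; exact hM)
  rwa [abs_of_nonneg (sub_nonneg.2 ht)] at this

lemma control_shift {u : ℝ → Fin m → ℝ} (hu : IsControl U u) {h : ℝ} (hh : 0 ≤ h) :
    IsControl U (fun t => u (h + t)) :=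
  ⟨hu.1.comp (by fun_prop), fun t ht => hu.2 _ (by linarith)⟩

lemma traj_shift (hU : IsCompact U) (hf : LipschitzWith K (Function.uncurry f))
    {x : Fin n → ℝ} {u : ℝ → Fin m → ℝ} {ξ : ℝ → Fin n → ℝ} (hu : IsControl U u)
    (hξ : IsTrajectory f x u ξ) {h : ℝ} (hh : 0 ≤ h) :
    IsTrajectory f (ξ h) (fun t => u (h + t)) (fun t => ξ (h + t)) := by
  refine ⟨hξ.1.comp (by fun_prop), fun t ht => ?_⟩
  have h1 := traj_sub hU hf hu hξ hh (show 0 ≤ h + t by linarith)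
  have h2 := intervalIntegral.integral_comp_add_left (a := 0) (b := t)
    (fun τ => f (ξ τ) (u τ)) h
  simp only [add_zero] at h2
  rw [h2, ← h1]
  simp

lemma traj_concat (hU : IsCompact U) (hf : LipschitzWith K (Function.uncurry f))
    {x : Fin n → ℝ} {u w : ℝ → Fin m → ℝ} {ξ ζ : ℝ → Fin n → ℝ} (hu : IsControl U u)
    (hξ : IsTrajectory f x u ξ) (hw : IsControl U w) {h : ℝ} (hh : 0 ≤ h)
    (hζ : IsTrajectory f (ξ h) w ζ) :
    ∃ u' ξ', IsControl U u' ∧ IsTrajectory f x u' ξ' ∧ (∀ t, t ≤ h → ξ' t = ξ t) ∧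
      ∀ t, 0 ≤ t → ξ' (h + t) = ζ t := by
  let u' : ℝ → Fin m → ℝ := fun s => if s ≤ h then u s else w (s - h)
  let ξ' : ℝ → Fin n → ℝ := fun s => if s ≤ h then ξ s else ζ (s - h)
  have hu' : IsControl U u' := by
    refine ⟨Measurable.ite measurableSet_Iic hu.1 (hw.1.comp (by fun_prop)), fun t ht => ?_⟩
    by_cases hth : t ≤ h
    · simp only [u', hth, if_true]; exact hu.2 t ht
    · simp only [u', hth, if_false]; exact hw.2 _ (by linarith)
  have hc : Continuous ξ' := by
    refine Continuous.if_le hξ.1 (hζ.1.comp (by fun_prop)) continuous_id continuous_const ?_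
    intro s hs
    have hs : s = h := hs
    simp [hs, traj_zero hζ]
  have hl : ∀ t, t ≤ h → ξ' t = ξ t := fun t ht => by simp [ξ', ht]
  have hr : ∀ t, 0 ≤ t → ξ' (h + t) = ζ t := by
    intro t ht
    rcases ht.eq_or_lt with rfl | ht
    · simp [ξ', traj_zero hζ]
    · have : ¬ h + t ≤ h := by linarith
      simp [ξ', this]
  refine ⟨u', ξ', hu', ⟨hc, ?_⟩, hl, hr⟩
  have hle : ∀ t, 0 ≤ t → t ≤ h → ∫ s in (0:ℝ)..t, f (ξ' s) (u' s) =
      ∫ s in (0:ℝ)..t, f (ξ s) (u s) := by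
    intro t ht hth
    refine intervalIntegral.integral_congr fun s hs => ?_
    rw [uIcc_of_le ht] at hs
    have : s ≤ h := hs.2.trans hth
    simp [ξ', u', this]
  intro t ht
  by_cases hth : t ≤ h
  · rw [hl t hth, hle t ht hth, hξ.2 t ht]
  · push Not at hth
    have ht' : 0 ≤ t - h := by linarith
    have e1 : ξ' t = ζ (t - h) := by rw [← hr _ ht', add_sub_cancel]
    have e2 : ∫ s in h..t, f (ξ' s) (u' s) = ∫ s in h..t, f (ζ (s - h)) (w (s - h)) := by
      refine intervalIntegral.integral_congr_ae (Eventually.of_forall fun s hs => ?_)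
      rw [uIoc_of_le hth.le] at hs
      have : ¬ s ≤ h := not_le.2 hs.1
      simp [ξ', u', this]
    have e3 := intervalIntegral.integral_comp_sub_right (a := h) (b := t)
      (fun τ => f (ζ τ) (w τ)) h
    rw [sub_self] at e3
    rw [e1, hζ.2 _ ht', ← intervalIntegral.integral_add_adjacent_intervals
      (int_cont hU hf hu' hc le_rfl hh) (int_cont hU hf hu' hc hh ht), e2, e3, hle h hh le_rfl,
      hξ.2 h hh, add_assoc]

end Traj


/-! ### The value function: characterisation, continuity, dynamic programming -/

section Value

variable {n m : ℕ} {f : (Fin n → ℝ) → (Fin m → ℝ) → Fin n → ℝ} {U : Set (Fin m → ℝ)} {K : NNReal}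
  {α : ℝ → ℝ} {β : ℝ → ℝ → ℝ} {g : (Fin n → ℝ) → ℝ} {v : (Fin n → ℝ) × ℝ → ℝ}

lemma const_control {u₀ : Fin m → ℝ} (h : u₀ ∈ U) : IsControl U (fun _ => u₀) :=
  ⟨measurable_const, fun _ _ => h⟩

lemma payoff_bdd (hβ : IsBetaFor α β) (hg0 : ∀ x, 0 ≤ g x) (ξ : ℝ → Fin n → ℝ) (T : ℝ) :
    BddBelow ((fun t => β (g (ξ t)) (T - t)) '' Set.Icc 0 T) := by
  refine ⟨0, ?_⟩
  rintro _ ⟨t, ht, rfl⟩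
  exact ((hβ _ (hg0 _)).2 _ (by linarith [ht.2])).1

lemma charA (hU : IsCompact U) (hUne : U.Nonempty) (hf : LipschitzWith K (Function.uncurry f))
    (hα : IsLocallyLipschitzClassK α) (hβ : IsBetaFor α β) (hg0 : ∀ x, 0 ≤ g x)
    (hv : ∀ x : Fin n → ℝ, ∀ T : ℝ, 0 ≤ T →
      0 ≤ v (x, T) ∧ β (v (x, T)) T = cbvfPayoff f U β g x T)
    {x : Fin n → ℝ} {T r : ℝ} (hT : 0 ≤ T) (hr : 0 ≤ r) (h : r < v (x, T)) :
    ∃ u ξ, IsControl U u ∧ IsTrajectory f x u ξ ∧ ∀ t ∈ Icc 0 T, β r t < g (ξ t) := by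
  have h1 := beta_strict hα hβ hr h hT
  rw [(hv x T hT).2, cbvfPayoff] at h1
  obtain ⟨u₀, hu₀⟩ := hUne
  obtain ⟨ξ₀, hξ₀⟩ := traj_exists hU hf (const_control hu₀) x
  obtain ⟨y, ⟨u, ξ, hu, hξ, rfl⟩, hy⟩ :=
    exists_lt_of_lt_csSup (by exact ⟨_, _, ξ₀, const_control hu₀, hξ₀, rfl⟩) h1
  refine ⟨u, ξ, hu, hξ, fun t ht => ?_⟩
  have h2 := csInf_le (payoff_bdd hβ hg0 ξ T) ⟨t, ht, rfl⟩
  have h3 := hy.trans_le h2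
  have htT : 0 ≤ T - t := by linarith [ht.2]
  have h4 := beta_semigroup hα hβ hr ht.1 htT
  rw [add_sub_cancel] at h4
  rw [← h4] at h3
  by_contra hcon
  push Not at hcon
  exact absurd (beta_mono hα hβ (hg0 _) hcon htT) (not_le.2 h3)

lemma charB (hα : IsLocallyLipschitzClassK α) (hβ : IsBetaFor α β) (hg0 : ∀ x, 0 ≤ g x)
    (hv : ∀ x : Fin n → ℝ, ∀ T : ℝ, 0 ≤ T →
      0 ≤ v (x, T) ∧ β (v (x, T)) T = cbvfPayoff f U β g x T)
    {x : Fin n → ℝ} {T r : ℝ} (hT : 0 ≤ T) (hr : 0 ≤ r) {u : ℝ → Fin m → ℝ}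
    {ξ : ℝ → Fin n → ℝ} (hu : IsControl U u) (hξ : IsTrajectory f x u ξ)
    (h : ∀ t ∈ Icc 0 T, β r t ≤ g (ξ t)) : r ≤ v (x, T) := by
  have h1 : β r T ≤ sInf ((fun t => β (g (ξ t)) (T - t)) '' Set.Icc 0 T) := by
    refine le_csInf ((nonempty_Icc.2 hT).image _) ?_
    rintro _ ⟨t, ht, rfl⟩
    have htT : 0 ≤ T - t := by linarith [ht.2]
    have h4 := beta_semigroup hα hβ hr ht.1 htT
    rw [add_sub_cancel] at h4
    rw [← h4]
    exact beta_mono hα hβ ((hβ r hr).2 t ht.1).1 (h t ht) htT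
  have h2 : β r T ≤ β (v (x, T)) T := by
    rw [(hv x T hT).2]
    refine h1.trans (le_csSup ?_ ⟨u, ξ, hu, hξ, rfl⟩)
    refine ⟨β (g x) T, ?_⟩
    rintro _ ⟨w, ζ, _, hζ, rfl⟩
    refine (csInf_le (payoff_bdd hβ hg0 ζ T) ⟨0, left_mem_Icc.2 hT, rfl⟩).trans (le_of_eq ?_)
    simp [traj_zero hζ]
  by_contra hcon
  push Not at hcon
  exact absurd (beta_strict hα hβ (hv x T hT).1 hcon hT) (not_lt.2 h2)

lemma v_le_g (hU : IsCompact U) (hUne : U.Nonempty) (hf : LipschitzWith K (Function.uncurry f))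
    (hα : IsLocallyLipschitzClassK α) (hβ : IsBetaFor α β) (hg0 : ∀ x, 0 ≤ g x)
    (hv : ∀ x : Fin n → ℝ, ∀ T : ℝ, 0 ≤ T →
      0 ≤ v (x, T) ∧ β (v (x, T)) T = cbvfPayoff f U β g x T)
    {x : Fin n → ℝ} {T : ℝ} (hT : 0 ≤ T) : v (x, T) ≤ g x := by
  by_contra hcon
  push Not at hcon
  obtain ⟨u, ξ, _, hξ, h⟩ := charA hU hUne hf hα hβ hg0 hv hT (hg0 x) hcon
  have := h 0 (left_mem_Icc.2 hT)
  rw [(hβ _ (hg0 x)).1, traj_zero hξ] at this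
  exact lt_irrefl _ this

lemma v_init (hU : IsCompact U) (hUne : U.Nonempty) (hf : LipschitzWith K (Function.uncurry f))
    (hα : IsLocallyLipschitzClassK α) (hβ : IsBetaFor α β) (hg0 : ∀ x, 0 ≤ g x)
    (hv : ∀ x : Fin n → ℝ, ∀ T : ℝ, 0 ≤ T →
      0 ≤ v (x, T) ∧ β (v (x, T)) T = cbvfPayoff f U β g x T)
    (x : Fin n → ℝ) : v (x, 0) = g x := by
  refine le_antisymm (v_le_g hU hUne hf hα hβ hg0 hv le_rfl) ?_
  obtain ⟨u₀, hu₀⟩ := hUne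
  obtain ⟨ξ₀, hξ₀⟩ := traj_exists hU hf (const_control hu₀) x
  refine charB hα hβ hg0 hv le_rfl (hg0 x) (const_control hu₀) hξ₀ fun t ht => ?_
  have : t = 0 := le_antisymm ht.2 ht.1
  rw [this, (hβ _ (hg0 x)).1, traj_zero hξ₀]

lemma v_transfer (hU : IsCompact U) (hUne : U.Nonempty)
    (hf : LipschitzWith K (Function.uncurry f))
    (hα : IsLocallyLipschitzClassK α) (hβ : IsBetaFor α β) (hg : Continuous g)
    (hg0 : ∀ x, 0 ≤ g x)
    (hv : ∀ x : Fin n → ℝ, ∀ T : ℝ, 0 ≤ T →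
      0 ≤ v (x, T) ∧ β (v (x, T)) T = cbvfPayoff f U β g x T)
    {x : Fin n → ℝ} {T r r' : ℝ} (hT : 0 ≤ T) (hr : 0 ≤ r) (hrr : r < r') :
    ∃ δ > 0, ∀ y z S S', ‖y - x‖ < δ → ‖z - x‖ < δ → 0 ≤ S → 0 ≤ S' → |S - T| < δ →
      |S' - T| < δ → r' < v (y, S) → r ≤ v (z, S') := by
  obtain ⟨C, hC0, hC⟩ := f_bound hU hf
  have hr' : 0 ≤ r' := hr.trans hrr.le
  obtain ⟨t₀, ht₀, hmin⟩ := (isCompact_Icc (a := (0:ℝ)) (b := T + 1)).exists_isMinOn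
    (nonempty_Icc.2 (by linarith))
    (((beta_cont hβ hr').sub (beta_cont hβ hr)).mono Icc_subset_Ici_self)
  set e := β r' t₀ - β r t₀ with he
  have he0 : 0 < e := sub_pos.2 (beta_strict hα hβ hr hrr ht₀.1)
  have hemin : ∀ t ∈ Icc 0 (T + 1), e ≤ β r' t - β r t := fun t ht => hmin ht
  set E := Real.exp (K * (T + 1)) with hE
  have hE0 : 0 < E := Real.exp_pos _
  set ρ := (‖x‖ + 1 + C * (T + 1)) * E with hρ
  have hρ0 : 0 ≤ ρ := by positivity
  set M := C + K * ρ with hM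
  have hM0 : 0 ≤ M := by positivity
  have huc := (isCompact_closedBall (0 : Fin n → ℝ) ρ).uniformContinuousOn_of_continuous
    hg.continuousOn
  obtain ⟨δ₁, hδ₁, hgδ⟩ := Metric.uniformContinuousOn_iff.1 huc e he0
  refine ⟨min 1 (δ₁ / (2 * (M + E))), by positivity, ?_⟩
  intro y z S S' hy hz hS hS' hST hST' hvy
  set δ := min 1 (δ₁ / (2 * (M + E))) with hδ
  have hδ1 : δ ≤ 1 := min_le_left _ _
  have hδ2 : 2 * δ * (M + E) ≤ δ₁ := by
    have : δ ≤ δ₁ / (2 * (M + E)) := min_le_right _ _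
    rw [le_div_iff₀ (by positivity)] at this
    linarith
  obtain ⟨u, ξ, hu, hξ, hβg⟩ := charA hU hUne hf hα hβ hg0 hv hS hr' hvy
  obtain ⟨η, hη⟩ := traj_exists hU hf hu z
  refine charB hα hβ hg0 hv hS' hr hu hη fun t ht => ?_
  rw [abs_lt] at hST hST'
  have hbd : ∀ w ζ, ‖w - x‖ < δ → IsTrajectory f w u ζ → ∀ s, 0 ≤ s → s ≤ T + 1 → ‖ζ s‖ ≤ ρ := by
    intro w ζ hw hζ s hs hsT
    refine (traj_bound hU hf hC0 hC hu hζ hs hsT).trans ?_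
    have : ‖w‖ ≤ ‖x‖ + 1 := by
      have := norm_add_le (w - x) x
      rw [sub_add_cancel] at this
      linarith
    rw [hρ]
    gcongr
  set t' := min t S with ht'
  have ht'0 : 0 ≤ t' := le_min ht.1 hS
  have ht'S : t' ≤ S := min_le_right _ _
  have ht't : t' ≤ t := min_le_left _ _
  have htT : t ≤ T + 1 := by linarith [ht.2]
  have htt' : t - t' ≤ 2 * δ := by
    rcases min_choice t S with h | h
    · rw [ht', h]; linarith
    · rw [ht', h]; linarith [ht.2]
  have d1 : ‖η t - η t'‖ ≤ M * (2 * δ) := by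
    refine (traj_incr hU hf (M := M) hu hη ht'0 ht't fun τ hτ => ?_).trans (by gcongr)
    have := hbd z η hz hη τ (ht'0.trans hτ.1.le) (hτ.2.trans htT)
    exact (hC _ (hu.2 τ (ht'0.trans hτ.1.le)) _).trans (by rw [hM]; gcongr)
  have d2 : ‖η t' - ξ t'‖ < 2 * δ * E := by
    have h1 := traj_dist hU hf hu hη hξ ht'0
    have h2 : ‖z - y‖ < 2 * δ := by
      have := norm_sub_le (z - x) (y - x)
      rw [sub_sub_sub_cancel_right] at this
      linarith
    have h3 : Real.exp (K * t') ≤ E := by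
      rw [hE]
      have := ht't.trans htT
      gcongr
    calc _ ≤ _ := h1
      _ ≤ ‖z - y‖ * E := by gcongr
      _ < _ := by gcongr
  have d3 : dist (η t) (ξ t') < δ₁ := by
    rw [dist_eq_norm]
    have := norm_add_le (η t - η t') (η t' - ξ t')
    rw [sub_add_sub_cancel] at this
    nlinarith
  have g1 := hgδ (η t) (mem_closedBall_zero_iff.2 (hbd z η hz hη t ht.1 htT)) (ξ t')
    (mem_closedBall_zero_iff.2 (hbd y ξ hy hξ t' ht'0 (ht't.trans htT))) d3
  rw [Real.dist_eq, abs_lt] at g1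
  have g2 := hβg t' ⟨ht'0, ht'S⟩
  have g3 := beta_anti hα hβ hr' ht'0 ht't
  have g4 := hemin t ⟨ht.1, htT⟩
  linarith [g1.1]

lemma v_cont (hU : IsCompact U) (hUne : U.Nonempty)
    (hf : LipschitzWith K (Function.uncurry f))
    (hα : IsLocallyLipschitzClassK α) (hβ : IsBetaFor α β) (hg : Continuous g)
    (hg0 : ∀ x, 0 ≤ g x)
    (hv : ∀ x : Fin n → ℝ, ∀ T : ℝ, 0 ≤ T →
      0 ≤ v (x, T) ∧ β (v (x, T)) T = cbvfPayoff f U β g x T) :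
    ContinuousOn v {p : (Fin n → ℝ) × ℝ | 0 ≤ p.2} := by
  rintro ⟨x, T⟩ (hT : 0 ≤ T)
  rw [Metric.continuousWithinAt_iff]
  intro ε hε
  have hv0 := (hv x T hT).1
  obtain ⟨δ₁, hδ₁, h1⟩ := v_transfer hU hUne hf hα hβ hg hg0 hv (x := x) hT
    (r := v (x, T) + ε / 4) (r' := v (x, T) + ε / 2) (by positivity) (by linarith)
  obtain ⟨δ₂, hδ₂, h2⟩ : ∃ δ > 0, ∀ z S', ‖z - x‖ < δ → 0 ≤ S' → |S' - T| < δ →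
      v (x, T) - ε / 2 ≤ v (z, S') := by
    by_cases hc : 0 ≤ v (x, T) - ε / 2
    · obtain ⟨δ₂, hδ₂, h2⟩ := v_transfer hU hUne hf hα hβ hg hg0 hv (x := x) hT
        (r := v (x, T) - ε / 2) (r' := v (x, T) - ε / 4) hc (by linarith)
      refine ⟨δ₂, hδ₂, fun z S' hz hS' hST => ?_⟩
      exact h2 x z T S' (by simpa) hz hT hS' (by simpa) hST (by linarith)
    · exact ⟨1, one_pos, fun z S' _ hS' _ => by linarith [(hv z S' hS').1]⟩
  refine ⟨min δ₁ δ₂, by positivity, ?_⟩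
  rintro ⟨z, S⟩ (hS : 0 ≤ S) hd
  rw [Prod.dist_eq, max_lt_iff, dist_eq_norm, Real.dist_eq, lt_min_iff, lt_min_iff] at hd
  simp only at hd
  rw [Real.dist_eq, abs_lt]
  constructor
  · have := h2 z S hd.1.2 hS hd.2.2
    linarith
  · by_contra hcon
    push Not at hcon
    have := h1 z x S T hd.1.1 (by simpa) hS hT hd.2.1 (by simpa) (by linarith)
    linarith

lemma dpp_sub (hU : IsCompact U) (hUne : U.Nonempty)
    (hf : LipschitzWith K (Function.uncurry f))
    (hα : IsLocallyLipschitzClassK α) (hβ : IsBetaFor α β)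
    (hg0 : ∀ x, 0 ≤ g x)
    (hv : ∀ x : Fin n → ℝ, ∀ T : ℝ, 0 ≤ T →
      0 ≤ v (x, T) ∧ β (v (x, T)) T = cbvfPayoff f U β g x T)
    {x : Fin n → ℝ} {T h : ℝ} (hh : 0 < h) (hhT : h ≤ T) :
    ∃ u ξ, IsControl U u ∧ IsTrajectory f x u ξ ∧
      v (x, T) - h ^ 2 - h * α (v (x, T)) ≤ v (ξ h, T - h) := by
  have hT : 0 ≤ T := hh.le.trans hhT
  have hv0 := (hv x T hT).1
  have hTh : 0 ≤ T - h := by linarith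
  by_cases hc : 0 ≤ v (x, T) - h ^ 2
  · obtain ⟨u, ξ, hu, hξ, hb⟩ := charA hU hUne hf hα hβ hg0 hv hT hc
      (sub_lt_self _ (by positivity))
    refine ⟨u, ξ, hu, hξ, ?_⟩
    have h1 : β (v (x, T) - h ^ 2) h ≤ v (ξ h, T - h) := by
      refine charB hα hβ hg0 hv hTh ((hβ _ hc).2 h hh.le).1 (control_shift hu hh.le)
        (traj_shift hU hf hu hξ hh.le) fun t ht => ?_
      rw [beta_semigroup hα hβ hc hh.le ht.1]
      exact (hb (h + t) ⟨by linarith [ht.1], by linarith [ht.2]⟩).le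
    have h2 := (beta_bounds hα hβ hc hh).1
    have h3 := alpha_mono hα hc (s := v (x, T)) (by linarith [sq_nonneg h])
    nlinarith
  · obtain ⟨u₀, hu₀⟩ := hUne
    obtain ⟨ξ₀, hξ₀⟩ := traj_exists hU hf (const_control hu₀) x
    refine ⟨_, ξ₀, const_control hu₀, hξ₀, ?_⟩
    have h1 := alpha_mono hα le_rfl hv0
    rw [hα.1.2.2] at h1
    have h2 := (hv (ξ₀ h) (T - h) hTh).1
    nlinarith

lemma dpp_super (hU : IsCompact U) (hUne : U.Nonempty)
    (hf : LipschitzWith K (Function.uncurry f))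
    (hα : IsLocallyLipschitzClassK α) (hβ : IsBetaFor α β) (hg : Continuous g)
    (hg0 : ∀ x, 0 ≤ g x)
    (hv : ∀ x : Fin n → ℝ, ∀ T : ℝ, 0 ≤ T →
      0 ≤ v (x, T) ∧ β (v (x, T)) T = cbvfPayoff f U β g x T)
    {x : Fin n → ℝ} {T : ℝ} (hT : 0 < T) (hlt : v (x, T) < g x)
    {u : ℝ → Fin m → ℝ} {ξ : ℝ → Fin n → ℝ} (hu : IsControl U u) (hξ : IsTrajectory f x u ξ) :
    ∃ h₀ > 0, ∀ h, 0 < h → h < h₀ →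
      v (ξ h, T - h) ≤ v (x, T) + h ^ 2 - h * α (β (v (x, T)) h) := by
  have hv0 := (hv x T hT.le).1
  set r₀ := (v (x, T) + g x) / 2 with hr₀
  have hc : Continuous fun t => g (ξ t) := hg.comp hξ.1
  have h0 : r₀ < g (ξ 0) := by rw [traj_zero hξ]; linarith
  obtain ⟨ε, hε, hball⟩ := Metric.eventually_nhds_iff.1
    (hc.continuousAt.eventually (lt_mem_nhds h0))
  refine ⟨min (min ε T) (min 1 (r₀ - v (x, T))), ?_, ?_⟩
  · have : 0 < r₀ - v (x, T) := by linarith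
    positivity
  intro h hh hlt'
  simp only [lt_min_iff] at hlt'
  obtain ⟨⟨hhε, hhT⟩, hh1, hhr⟩ := hlt'
  set r := v (x, T) + h ^ 2 with hr
  have hr0 : 0 ≤ r := by positivity
  have hvr : v (x, T) ≤ r := by linarith [sq_nonneg h]
  have hrr₀ : r ≤ r₀ := by nlinarith
  have hTh : 0 ≤ T - h := by linarith
  by_contra hcon
  push Not at hcon
  have h1 := (beta_bounds hα hβ hr0 hh).2
  have h2 := alpha_mono hα ((hβ _ hv0).2 h hh.le).1 (beta_mono hα hβ hv0 hvr hh.le)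
  have h3 : β r h < v (ξ h, T - h) := by nlinarith
  obtain ⟨w, ζ, hw, hζ, hb⟩ := charA hU hUne hf hα hβ hg0 hv hTh ((hβ _ hr0).2 h hh.le).1 h3
  obtain ⟨u', ξ', hu', hξ', hl, hr'⟩ := traj_concat hU hf hu hξ hw hh.le hζ
  have h4 : r ≤ v (x, T) := by
    refine charB hα hβ hg0 hv hT.le hr0 hu' hξ' fun t ht => ?_
    by_cases hth : t ≤ h
    · rw [hl t hth]
      have h5 : r₀ < g (ξ t) := hball (by
        rw [Real.dist_eq, sub_zero, abs_of_nonneg ht.1]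
        linarith)
      have h6 := ((hβ _ hr0).2 t ht.1).2.1
      linarith
    · push Not at hth
      have h5 := hb (t - h) ⟨by linarith, by linarith [ht.2]⟩
      rw [beta_semigroup hα hβ hr0 hh.le (by linarith), add_sub_cancel] at h5
      rw [← hr' (t - h) (by linarith), add_sub_cancel] at h5
      exact h5.le
  have : 0 < h ^ 2 := by positivity
  linarith

/-! ### The viscosity inequalities for the value function -/

lemma lin_bound (hU : IsCompact U) (hf : LipschitzWith K (Function.uncurry f))
    {M c h : ℝ} {x : Fin n → ℝ} {u : ℝ → Fin m → ℝ} {ξ : ℝ → Fin n → ℝ} (hu : IsControl U u)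
    (hξ : IsTrajectory f x u ξ) (B : (Fin n → ℝ) →L[ℝ] ℝ) (hh : 0 ≤ h)
    (hM : ∀ s ∈ Icc 0 h, ‖ξ s - x‖ ≤ M)
    (hc : ∀ s ∈ Icc 0 h, B (f x (u s)) ≤ c) :
    B (ξ h - x) ≤ h * (c + ‖B‖ * (K * M)) := by
  have h1 := traj_sub hU hf hu hξ le_rfl hh
  rw [traj_zero hξ] at h1
  have hi := int_cont hU hf hu hξ.1 le_rfl hh
  rw [h1, ← B.intervalIntegral_comp_comm hi]
  have h2 : ∫ s in (0:ℝ)..h, B (f (ξ s) (u s)) ≤ ∫ s in (0:ℝ)..h, (c + ‖B‖ * (K * M)) := by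
    refine intervalIntegral.integral_mono_on hh ?_ intervalIntegrable_const ?_
    · exact ⟨B.integrable_comp hi.1, B.integrable_comp hi.2⟩
    · intro s hs
      have e1 : B (f (ξ s) (u s)) = B (f x (u s)) + B (f (ξ s) (u s) - f x (u s)) := by
        rw [map_sub]; ring
      have e2 := (le_abs_self _).trans (B.le_opNorm (f (ξ s) (u s) - f x (u s)))
      have e3 := f_lip hf (ξ s) x (u s)
      have e4 : (K:ℝ) * ‖ξ s - x‖ ≤ K * M := by
        have := hM s hs
        gcongr
      have e5 : ‖B‖ * ‖f (ξ s) (u s) - f x (u s)‖ ≤ ‖B‖ * (K * M) := by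
        have := e3.trans e4
        gcongr
      rw [e1]
      have := hc s hs
      linarith
  refine h2.trans (le_of_eq ?_)
  rw [intervalIntegral.integral_const, sub_zero, smul_eq_mul]

lemma traj_expand (hU : IsCompact U) (hf : LipschitzWith K (Function.uncurry f))
    {p : (Fin n → ℝ) × ℝ} {φ : (Fin n → ℝ) × ℝ → ℝ} (hφ : DifferentiableAt ℝ φ p)
    {P : (Fin n → ℝ) × ℝ → Prop} (hP : ∀ᶠ q in 𝓝 p, P q) {ε : ℝ} (hε : 0 < ε) :
    ∃ M, 0 ≤ M ∧ ∃ h₀ > 0, ∀ h, 0 < h → h < h₀ → ∀ u ξ, IsControl U u → IsTrajectory f p.1 u ξ →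
      P (ξ h, p.2 - h) ∧ (∀ s ∈ Icc 0 h, ‖ξ s - p.1‖ ≤ M * h) ∧
      |φ (ξ h, p.2 - h) - φ p - (fderiv ℝ φ p (ξ h - p.1, 0) - h * fderiv ℝ φ p (0, 1))|
        ≤ ε * h := by
  obtain ⟨C, hC0, hC⟩ := f_bound hU hf
  set ρ := (‖p.1‖ + C * 1) * Real.exp (K * 1) with hρ
  have hρ0 : 0 ≤ ρ := by positivity
  set M := C + K * ρ with hM
  have hM0 : 0 ≤ M := by positivity
  have hlo := hφ.hasFDerivAt.isLittleO.bound (c := ε / (M + 1)) (by positivity)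
  obtain ⟨δ, hδ, hball⟩ := Metric.eventually_nhds_iff.1 (hP.and hlo)
  refine ⟨M, hM0, min 1 (δ / (M + 1)), by positivity, ?_⟩
  intro h hh hlt u ξ hu hξ
  rw [lt_min_iff, lt_div_iff₀ (by positivity)] at hlt
  have hinc : ∀ s ∈ Icc 0 h, ‖ξ s - p.1‖ ≤ M * h := by
    intro s hs
    have := traj_incr hU hf (M := M) hu hξ le_rfl hs.1 (fun τ hτ => by
      have := traj_bound hU hf hC0 hC hu hξ hτ.1.le (hτ.2.trans (hs.2.trans hlt.1.le))
      exact (hC _ (hu.2 τ hτ.1.le) _).trans (by rw [hM]; gcongr))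
    rw [traj_zero hξ, sub_zero] at this
    exact this.trans (by have := hs.2; gcongr)
  have hq : ‖((ξ h, p.2 - h) : (Fin n → ℝ) × ℝ) - p‖ ≤ (M + 1) * h := by
    rw [Prod.norm_def]
    refine max_le ?_ ?_
    · have := hinc h ⟨hh.le, le_rfl⟩
      simp only [Prod.fst_sub]
      linarith
    · simp only [Prod.snd_sub, sub_sub_cancel_left, norm_neg, Real.norm_of_nonneg hh.le]
      nlinarith
  have := hball (y := (ξ h, p.2 - h)) (by rw [dist_eq_norm]; linarith)
  refine ⟨this.1, hinc, ?_⟩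
  have h1 := this.2
  have e : ((ξ h, p.2 - h) : (Fin n → ℝ) × ℝ) - p = (ξ h - p.1, 0) - h • ((0, 1) : (Fin n → ℝ) × ℝ) := by
    ext <;> simp
  have e2 : fderiv ℝ φ p (((ξ h, p.2 - h) : (Fin n → ℝ) × ℝ) - p) =
      fderiv ℝ φ p (ξ h - p.1, 0) - h * fderiv ℝ φ p (0, 1) := by
    rw [e, map_sub, map_smul, smul_eq_mul]
  rw [e2, Real.norm_eq_abs] at h1
  refine h1.trans ?_
  calc _ ≤ ε / (M + 1) * ((M + 1) * h) := by gcongr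
    _ = ε * h := by field_simp

lemma ham_bdd (hU : IsCompact U) (hf : LipschitzWith K (Function.uncurry f)) (x : Fin n → ℝ)
    (A : (Fin n → ℝ) × ℝ →L[ℝ] ℝ) : BddAbove ((fun u => A (f x u, 0)) '' U) := by
  have hc : Continuous (fun u => f x u) :=
    hf.continuous.comp (continuous_const.prodMk continuous_id)
  exact hU.bddAbove_image (A.continuous.comp (hc.prodMk continuous_const)).continuousOn

lemma v_visc (hU : IsCompact U) (hUne : U.Nonempty)
    (hf : LipschitzWith K (Function.uncurry f))
    (hα : IsLocallyLipschitzClassK α) (hβ : IsBetaFor α β) (hg : Continuous g)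
    (hg0 : ∀ x, 0 ≤ g x)
    (hv : ∀ x : Fin n → ℝ, ∀ T : ℝ, 0 ≤ T →
      0 ≤ v (x, T) ∧ β (v (x, T)) T = cbvfPayoff f U β g x T) :
    IsViscositySolnCBVF f U α g v := by
  constructor
  · rintro ⟨x, T⟩ (hT : 0 < T) φ hφ hmax
    refine max_le ?_ (sub_nonpos.2 (v_le_g hU hUne hf hα hβ hg0 hv hT.le))
    by_contra hcon
    push Not at hcon
    set A := fderiv ℝ φ (x, T) with hA
    set S := sSup ((fun u => A (f x u, 0)) '' U) with hS
    change 0 < A (0, 1) - (S + α (v (x, T))) at hcon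
    set γ := A (0, 1) - (S + α (v (x, T))) with hγ
    set B : (Fin n → ℝ) →L[ℝ] ℝ := A.comp (ContinuousLinearMap.inl ℝ _ _) with hB
    have hBA : ∀ y, B y = A (y, 0) := fun y => by simp [hB]
    obtain ⟨M, hM0, h₀, hh₀, hexp⟩ := traj_expand hU hf
      ((hφ.differentiable one_ne_zero) (x, T)) hmax (ε := γ / 4) (by positivity)
    set h := min (min (h₀ / 2) T) (γ / (4 * (1 + ‖B‖ * (K * M)))) with hh
    have hh0 : 0 < h := by positivity
    have hhh₀ : h < h₀ := by
      have : h ≤ h₀ / 2 := (min_le_left _ _).trans (min_le_left _ _)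
      linarith
    have hhT : h ≤ T := (min_le_left _ _).trans (min_le_right _ _)
    have hhγ : h * (1 + ‖B‖ * (K * M)) ≤ γ / 4 := by
      have : h ≤ γ / (4 * (1 + ‖B‖ * (K * M))) := min_le_right _ _
      rw [le_div_iff₀ (by positivity)] at this
      linarith
    obtain ⟨u, ξ, hu, hξ, hd⟩ := dpp_sub hU hUne hf hα hβ hg0 hv (x := x) hh0 hhT
    obtain ⟨h1, h2, h3⟩ := hexp h hh0 hhh₀ u ξ hu hξ
    have h4 := lin_bound (c := S) hU hf hu hξ B hh0.le h2 (fun s hs => by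
      rw [hBA]
      exact le_csSup (ham_bdd hU hf x A) ⟨u s, hu.2 s hs.1, rfl⟩)
    rw [hBA] at h4
    simp only at h1 h3 h4
    have h5 := (abs_le.1 h3).2
    have h6 : h * γ ≤ h * (γ / 4 + γ / 4) := by
      have : h * (h * (1 + ‖B‖ * (K * M))) ≤ h * (γ / 4) := by gcongr
      have e : h * γ = h * A (0, 1) - h * S - h * α (v (x, T)) := by rw [hγ]; ring
      rw [← hA] at h5
      nlinarith
    have := le_of_mul_le_mul_left h6 hh0
    linarith
  · rintro ⟨x, T⟩ (hT : 0 < T) φ hφ hmin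
    by_contra hcon
    push Not at hcon
    rw [max_lt_iff] at hcon
    obtain ⟨hcon, hvg⟩ := hcon
    set A := fderiv ℝ φ (x, T) with hA
    simp only at hcon hvg
    have hvg : v (x, T) < g x := by linarith
    obtain ⟨_, ⟨u₀, hu₀, rfl⟩, hu₀'⟩ := exists_lt_of_lt_csSup (hUne.image (fun u => A (f x u, 0)))
      (show A (0, 1) - α (v (x, T)) < _ by linarith)
    simp only at hu₀'
    set γ := A (f x u₀, 0) - (A (0, 1) - α (v (x, T))) with hγ
    have hγ0 : 0 < γ := by linarith
    have hv0 := (hv x T hT.le).1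
    set B : (Fin n → ℝ) →L[ℝ] ℝ := A.comp (ContinuousLinearMap.inl ℝ _ _) with hB
    have hBA : ∀ y, B y = A (y, 0) := fun y => by simp [hB]
    obtain ⟨M, hM0, h₀, hh₀, hexp⟩ := traj_expand hU hf
      ((hφ.differentiable one_ne_zero) (x, T)) hmin (ε := γ / 4) (by positivity)
    obtain ⟨ξ, hξ⟩ := traj_exists hU hf (const_control hu₀) x
    obtain ⟨h₁, hh₁, hd⟩ := dpp_super hU hUne hf hα hβ hg hg0 hv hT hvg (const_control hu₀) hξ
    have hαc : ContinuousWithinAt (fun t => α (β (v (x, T)) t)) (Ici 0) 0 := by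
      refine ContinuousWithinAt.comp (t := Ici 0) (g := α) (f := β (v (x, T))) ?_
        (beta_cont hβ hv0 0 self_mem_Ici) ?_
      · rw [(hβ _ hv0).1]; exact hα.1.1 _ hv0
      · intro t ht; exact ((hβ _ hv0).2 t ht).1
    obtain ⟨h₂, hh₂, hα2⟩ := Metric.continuousWithinAt_iff.1 hαc (γ / 4) (by positivity)
    set h := min (min (h₀ / 2) (min (h₁ / 2) (h₂ / 2))) (γ / (4 * (1 + ‖B‖ * (K * M)))) with hh
    have hh0 : 0 < h := by positivity
    have hhh₀ : h < h₀ := by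
      have : h ≤ h₀ / 2 := (min_le_left _ _).trans (min_le_left _ _)
      linarith
    have hhh₁ : h < h₁ := by
      have : h ≤ h₁ / 2 := (min_le_left _ _).trans ((min_le_right _ _).trans (min_le_left _ _))
      linarith
    have hhh₂ : h < h₂ := by
      have : h ≤ h₂ / 2 := (min_le_left _ _).trans ((min_le_right _ _).trans (min_le_right _ _))
      linarith
    have hhγ : h * (1 + ‖B‖ * (K * M)) ≤ γ / 4 := by
      have : h ≤ γ / (4 * (1 + ‖B‖ * (K * M))) := min_le_right _ _
      rw [le_div_iff₀ (by positivity)] at this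
      linarith
    have hd' := hd h hh0 hhh₁
    obtain ⟨h1, h2, h3⟩ := hexp h hh0 hhh₀ _ ξ (const_control hu₀) hξ
    have h4 := lin_bound (c := -B (f x u₀)) hU hf (const_control hu₀) hξ (-B) hh0.le h2
      (fun s hs => le_rfl)
    rw [norm_neg, neg_apply, hBA, hBA] at h4
    have h7 := hα2 (x := h) hh0.le (by rw [Real.dist_eq, sub_zero, abs_of_pos hh0]; exact hhh₂)
    rw [(hβ _ hv0).1, Real.dist_eq, abs_lt] at h7
    simp only at h1 h3 h4
    have h5 := (abs_le.1 h3).1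
    rw [← hA] at h5
    have h6 : h * γ ≤ h * (γ / 4 + γ / 4 + γ / 4) := by
      have e0 : h * (h * (1 + ‖B‖ * (K * M))) ≤ h * (γ / 4) := by gcongr
      have e : h * γ = h * A (f x u₀, 0) - h * A (0, 1) + h * α (v (x, T)) := by rw [hγ]; ring
      have e1 : h * (-(γ / 4)) ≤ h * (α (β (v (x, T)) h) - α (v (x, T))) :=
        mul_le_mul_of_nonneg_left h7.1.le hh0.le
      nlinarith
    have := le_of_mul_le_mul_left h6 hh0
    linarith

end Value


/-! ### Comparison principle -/

noncomputable section Comparison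

/-- Squared Euclidean distance on space-time. -/
def qd {n : ℕ} (p q : (Fin n → ℝ) × ℝ) : ℝ := ∑ i, (p.1 i - q.1 i) ^ 2 + (p.2 - q.2) ^ 2

/-- The function whose sublevel sets are domains of dependence. -/
def cone {n : ℕ} (c : ℝ) (p : (Fin n → ℝ) × ℝ) : ℝ := Real.exp (c * p.2) * (1 + ∑ i, p.1 i ^ 2)

/-- The barrier. -/
def barr {n : ℕ} (c k R δ : ℝ) (p : (Fin n → ℝ) × ℝ) : ℝ := δ * Real.exp (k * (cone c p - R))

variable {n m : ℕ}

lemma qd_contDiff (q : (Fin n → ℝ) × ℝ) : ContDiff ℝ 1 (fun p => qd p q) := by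
  unfold qd; fun_prop

lemma qd_contDiff' (p : (Fin n → ℝ) × ℝ) : ContDiff ℝ 1 (fun q => qd p q) := by
  unfold qd; fun_prop

lemma qd_continuous : Continuous (fun z : ((Fin n → ℝ) × ℝ) × ((Fin n → ℝ) × ℝ) => qd z.1 z.2) := by
  unfold qd; fun_prop

lemma cone_contDiff (c : ℝ) : ContDiff ℝ 1 (cone c : (Fin n → ℝ) × ℝ → ℝ) := by
  unfold cone; fun_prop

lemma barr_contDiff (c k R δ : ℝ) : ContDiff ℝ 1 (barr c k R δ : (Fin n → ℝ) × ℝ → ℝ) := by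
  have := cone_contDiff (n := n) c
  unfold barr; fun_prop

lemma qd_nonneg (p q : (Fin n → ℝ) × ℝ) : 0 ≤ qd p q := by
  unfold qd; positivity

lemma qd_self (p : (Fin n → ℝ) × ℝ) : qd p p = 0 := by
  simp [qd]

lemma norm_sq_le (z : Fin n → ℝ) : ‖z‖ ^ 2 ≤ ∑ i, z i ^ 2 := by
  have h0 : 0 ≤ ∑ i, z i ^ 2 := by positivity
  have : ‖z‖ ≤ Real.sqrt (∑ i, z i ^ 2) := by
    refine (pi_norm_le_iff_of_nonneg (Real.sqrt_nonneg _)).2 fun i => ?_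
    rw [Real.norm_eq_abs]
    exact Real.abs_le_sqrt (Finset.single_le_sum (f := fun i => z i ^ 2)
      (fun _ _ => sq_nonneg _) (Finset.mem_univ i))
  calc ‖z‖ ^ 2 ≤ (Real.sqrt (∑ i, z i ^ 2)) ^ 2 := by gcongr
    _ = _ := Real.sq_sqrt h0

lemma dot_le (z w : Fin n → ℝ) : ∑ i, z i * w i ≤ n * (‖z‖ * ‖w‖) := by
  calc ∑ i, z i * w i ≤ ∑ _i : Fin n, ‖z‖ * ‖w‖ := by
        refine Finset.sum_le_sum fun i _ => ?_
        refine (le_abs_self _).trans ?_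
        rw [abs_mul]
        have h1 := norm_le_pi_norm z i
        have h2 := norm_le_pi_norm w i
        rw [Real.norm_eq_abs] at h1 h2
        gcongr
    _ = _ := by simp

lemma qd_eq_zero {p q : (Fin n → ℝ) × ℝ} (h : qd p q = 0) : p = q := by
  have h1 : ‖p.1 - q.1‖ ^ 2 ≤ ∑ i, (p.1 i - q.1 i) ^ 2 := norm_sq_le (p.1 - q.1)
  unfold qd at h
  have h2 := sq_nonneg (p.2 - q.2)
  have h3 := sq_nonneg ‖p.1 - q.1‖
  have h4 : ‖p.1 - q.1‖ = 0 := pow_eq_zero_iff two_ne_zero |>.1 (by linarith)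
  have h5 : p.2 - q.2 = 0 := pow_eq_zero_iff two_ne_zero |>.1 (by linarith)
  exact Prod.ext (sub_eq_zero.1 (norm_eq_zero.1 h4)) (sub_eq_zero.1 h5)

lemma fderiv_of_line {φ : (Fin n → ℝ) × ℝ → ℝ} (hφ : ContDiff ℝ 1 φ) {p w : (Fin n → ℝ) × ℝ} {d : ℝ}
    (h : HasDerivAt (fun s : ℝ => φ (p + s • w)) d 0) : fderiv ℝ φ p w = d := by
  have h1 := ((hφ.differentiable one_ne_zero) p).hasFDerivAt.hasLineDerivAt w
  exact HasDerivAt.unique h1 h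

lemma line_add (a b : ℝ) : HasDerivAt (fun s : ℝ => a + s * b) b 0 := by
  simpa using ((hasDerivAt_id (0:ℝ)).mul_const b).const_add a

lemma fderiv_qd (p q w : (Fin n → ℝ) × ℝ) :
    fderiv ℝ (fun p => qd p q) p w =
      2 * ∑ i, (p.1 i - q.1 i) * w.1 i + 2 * (p.2 - q.2) * w.2 := by
  refine fderiv_of_line (qd_contDiff q) ?_
  have h1 : HasDerivAt (fun s : ℝ => ∑ i, ((p.1 i + s * w.1 i) - q.1 i) ^ 2 +
      ((p.2 + s * w.2) - q.2) ^ 2) _ 0 :=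
    (HasDerivAt.fun_sum fun i _ => ((line_add (p.1 i) (w.1 i)).sub_const (q.1 i)).fun_pow 2).add
      (((line_add p.2 w.2).sub_const q.2).fun_pow 2)
  refine h1.congr_deriv ?_
  simp [Finset.mul_sum]
  exact Finset.sum_congr rfl fun i _ => by ring

lemma fderiv_qd' (p q w : (Fin n → ℝ) × ℝ) :
    fderiv ℝ (fun q => qd p q) q w =
      -(2 * ∑ i, (p.1 i - q.1 i) * w.1 i + 2 * (p.2 - q.2) * w.2) := by
  have : (fun q => qd p q) = fun q => qd q p := by
    funext q
    unfold qd
    congr 1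
    · exact Finset.sum_congr rfl fun i _ => by ring
    · ring
  rw [this, fderiv_qd, Finset.mul_sum, Finset.mul_sum, neg_add, ← Finset.sum_neg_distrib]
  congr 1
  · exact Finset.sum_congr rfl fun i _ => by ring
  · ring

lemma fderiv_barr (c k R δ : ℝ) (p w : (Fin n → ℝ) × ℝ) :
    fderiv ℝ (barr c k R δ) p w = k * barr c k R δ p *
      (Real.exp (c * p.2) * (c * w.2 * (1 + ∑ i, p.1 i ^ 2) + 2 * ∑ i, p.1 i * w.1 i)) := by
  refine fderiv_of_line (barr_contDiff c k R δ) ?_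
  have h1 : HasDerivAt (fun s : ℝ => Real.exp (c * (p.2 + s * w.2)) *
      (1 + ∑ i, (p.1 i + s * w.1 i) ^ 2)) _ 0 :=
    (((line_add p.2 w.2).const_mul c).exp).mul
      ((HasDerivAt.fun_sum fun i _ => (line_add (p.1 i) (w.1 i)).fun_pow 2).const_add 1)
  have h2 := (((h1.sub_const R).const_mul k).exp).const_mul δ
  refine HasDerivAt.congr_deriv (f := fun s : ℝ => barr c k R δ (p + s • w)) h2 ?_
  simp only [barr, cone, zero_mul, add_zero]
  have : ∑ i, (((2:ℕ):ℝ) * p.1 i ^ (2 - 1) * w.1 i) = 2 * ∑ i, p.1 i * w.1 i := by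
    rw [Finset.mul_sum]
    refine Finset.sum_congr rfl fun i _ => ?_
    norm_num
    ring
  rw [this]
  ring

/-- Doubling of variables. -/
lemma doubling {D : Set ((Fin n → ℝ) × ℝ)} (hD : IsCompact D) {w₁ w₂ ψ : (Fin n → ℝ) × ℝ → ℝ}
    (h₁ : ContinuousOn w₁ D) (h₂ : ContinuousOn w₂ D) (hψ : Continuous ψ)
    (hle : ∀ p ∈ D, w₁ p - w₂ p - ψ p ≤ 0) (hex : ∃ p ∈ D, w₁ p - w₂ p - ψ p = 0) :
    ∃ (N : ℕ → ℝ) (a b : ℕ → (Fin n → ℝ) × ℝ) (z : (Fin n → ℝ) × ℝ), z ∈ D ∧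
      (∀ j, 0 ≤ N j) ∧ (∀ j, a j ∈ D) ∧ (∀ j, b j ∈ D) ∧
      Tendsto a atTop (𝓝 z) ∧ Tendsto b atTop (𝓝 z) ∧
      Tendsto (fun j => N j * qd (a j) (b j)) atTop (𝓝 0) ∧
      (∀ j, ∀ p ∈ D, ∀ q ∈ D, w₁ p - w₂ q - ψ p - N j * qd p q ≤
        w₁ (a j) - w₂ (b j) - ψ (a j) - N j * qd (a j) (b j)) ∧
      w₁ z - w₂ z - ψ z = 0 := by
  obtain ⟨p₀, hp₀, hp₀'⟩ := hex
  have hF : ContinuousOn (fun z : ((Fin n → ℝ) × ℝ) × ((Fin n → ℝ) × ℝ) =>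
      w₁ z.1 - w₂ z.2 - ψ z.1) (D ×ˢ D) := by
    refine ContinuousOn.sub (ContinuousOn.sub ?_ ?_) (hψ.comp continuous_fst).continuousOn
    · exact h₁.comp continuous_fst.continuousOn fun z hz => hz.1
    · exact h₂.comp continuous_snd.continuousOn fun z hz => hz.2
  have hDD := hD.prod hD
  have hmax : ∀ j : ℕ, ∃ z ∈ D ×ˢ D, IsMaxOn (fun z : ((Fin n → ℝ) × ℝ) × ((Fin n → ℝ) × ℝ) =>
      w₁ z.1 - w₂ z.2 - ψ z.1 - (j:ℝ) * qd z.1 z.2) (D ×ˢ D) z := fun j =>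
    hDD.exists_isMaxOn ⟨(p₀, p₀), hp₀, hp₀⟩
      (hF.sub (continuous_const.mul qd_continuous).continuousOn)
  choose P hPD hPm using hmax
  obtain ⟨⟨z, z'⟩, hz, σ, hσ, hlim⟩ := hDD.tendsto_subseq hPD
  obtain ⟨G, hG⟩ := hDD.exists_bound_of_continuousOn hF
  have hval : ∀ j : ℕ, (j:ℝ) * qd (P j).1 (P j).2 ≤ w₁ (P j).1 - w₂ (P j).2 - ψ (P j).1 := by
    intro j
    have h := hPm j (show (p₀, p₀) ∈ D ×ˢ D from ⟨hp₀, hp₀⟩)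
    simp only [mem_setOf_eq, qd_self, mul_zero, sub_zero, hp₀'] at h
    linarith
  have hqlim : Tendsto (fun j => qd (P (σ j)).1 (P (σ j)).2) atTop (𝓝 (qd z z')) :=
    (qd_continuous.tendsto (z, z')).comp hlim
  have hσ' : Tendsto (fun j => (σ j : ℝ)) atTop atTop :=
    tendsto_natCast_atTop_atTop.comp hσ.tendsto_atTop
  have hq0 : qd z z' = 0 := by
    refine le_antisymm ?_ (qd_nonneg _ _)
    have hdiv : Tendsto (fun j => G / (σ j : ℝ)) atTop (𝓝 0) := hσ'.const_div_atTop G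
    refine le_of_tendsto_of_tendsto hqlim hdiv ?_
    filter_upwards [hσ'.eventually_gt_atTop 0] with j hj
    rw [le_div_iff₀ hj]
    have := (le_abs_self _).trans (hG _ (hPD (σ j)))
    have := hval (σ j)
    linarith
  obtain rfl := qd_eq_zero hq0
  have hFlim : Tendsto (fun j => w₁ (P (σ j)).1 - w₂ (P (σ j)).2 - ψ (P (σ j)).1) atTop
      (𝓝 (w₁ z - w₂ z - ψ z)) := by
    have := hF (z, z) hz
    refine Tendsto.comp (f := P ∘ σ) this (tendsto_nhdsWithin_iff.2 ⟨hlim, ?_⟩)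
    exact Eventually.of_forall fun j => hPD (σ j)
  have hz0 : w₁ z - w₂ z - ψ z = 0 := by
    refine le_antisymm (hle z hz.1) (ge_of_tendsto' hFlim fun j => ?_)
    exact (mul_nonneg (Nat.cast_nonneg _) (qd_nonneg _ _)).trans (hval (σ j))
  rw [hz0] at hFlim
  refine ⟨fun j => σ j, fun j => (P (σ j)).1, fun j => (P (σ j)).2, z, hz.1,
    fun j => Nat.cast_nonneg _, fun j => (hPD _).1, fun j => (hPD _).2, ?_, ?_, ?_, ?_, hz0⟩
  · exact (continuous_fst.tendsto (z, z)).comp hlim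
  · exact (continuous_snd.tendsto (z, z)).comp hlim
  · exact squeeze_zero (fun j => mul_nonneg (Nat.cast_nonneg _) (qd_nonneg _ _))
      (fun j => hval (σ j)) hFlim
  · intro j p hp q hq
    exact hPm (σ j) (show (p, q) ∈ D ×ˢ D from ⟨hp, hq⟩)

/-- The algebra combining the sub- and super-solution inequalities. -/
lemma key_ineq {f : (Fin n → ℝ) → (Fin m → ℝ) → Fin n → ℝ} {U : Set (Fin m → ℝ)} {K : NNReal}
    (hU : IsCompact U) (hUne : U.Nonempty) (hf : LipschitzWith K (Function.uncurry f))
    {ψ : (Fin n → ℝ) × ℝ → ℝ} (hψ : ContDiff ℝ 1 ψ) {p q : (Fin n → ℝ) × ℝ} {N M a₁ a₂ : ℝ}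
    (hN : 0 ≤ N)
    (hsub : fderiv ℝ (fun z => ψ z + N * qd z q) p ((0, 1) : (Fin n → ℝ) × ℝ) -
      (sSup ((fun u => fderiv ℝ (fun z => ψ z + N * qd z q) p (f p.1 u, 0)) '' U) + a₁) ≤ 0)
    (hsup : 0 ≤ fderiv ℝ (fun z => -N * qd p z) q ((0, 1) : (Fin n → ℝ) × ℝ) -
      (sSup ((fun u => fderiv ℝ (fun z => -N * qd p z) q (f q.1 u, 0)) '' U) + a₂))
    (hM : ∀ u ∈ U, M ≤ fderiv ℝ ψ p ((0, 1) : (Fin n → ℝ) × ℝ) - fderiv ℝ ψ p (f p.1 u, 0)) :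
    M ≤ 2 * n * K * (N * qd p q) + a₁ - a₂ := by
  have e1 : ∀ w, fderiv ℝ (fun z => ψ z + N * qd z q) p w = fderiv ℝ ψ p w +
      N * (2 * ∑ i, (p.1 i - q.1 i) * w.1 i + 2 * (p.2 - q.2) * w.2) := by
    intro w
    have d1 := (hψ.differentiable one_ne_zero) p
    have d2 := ((qd_contDiff q).differentiable one_ne_zero) p
    rw [fderiv_fun_add d1 (d2.const_mul N), fderiv_const_mul d2, ← fderiv_qd]
    rfl
  have e2 : ∀ w, fderiv ℝ (fun z => -N * qd p z) q w =
      N * (2 * ∑ i, (p.1 i - q.1 i) * w.1 i + 2 * (p.2 - q.2) * w.2) := by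
    intro w
    have d2 := ((qd_contDiff' p).differentiable one_ne_zero) q
    rw [fderiv_const_mul d2]
    have := fderiv_qd' p q w
    simp only [ContinuousLinearMap.smul_apply, smul_eq_mul, this]
    ring
  have hbdd := ham_bdd hU hf q.1 (fderiv ℝ (fun z => -N * qd p z) q)
  set S₁ := sSup ((fun u => fderiv ℝ (fun z => ψ z + N * qd z q) p (f p.1 u, 0)) '' U) with hS₁
  set S₂ := sSup ((fun u => fderiv ℝ (fun z => -N * qd p z) q (f q.1 u, 0)) '' U) with hS₂
  have hS : S₁ ≤ fderiv ℝ ψ p ((0, 1) : (Fin n → ℝ) × ℝ) - M + S₂ + 2 * n * K * (N * qd p q) := by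
    refine csSup_le (hUne.image _) ?_
    rintro _ ⟨u, hu, rfl⟩
    have i1 : fderiv ℝ (fun z => -N * qd p z) q (f q.1 u, 0) ≤ S₂ := le_csSup hbdd ⟨u, hu, rfl⟩
    rw [e2] at i1
    simp only [e1]
    have i2 := hM u hu
    have i3 : ∑ i, (p.1 i - q.1 i) * f p.1 u i ≤
        ∑ i, (p.1 i - q.1 i) * f q.1 u i + n * (K * qd p q) := by
      have j1 := dot_le (p.1 - q.1) (f p.1 u - f q.1 u)
      have j2 : ∑ i, (p.1 - q.1) i * (f p.1 u - f q.1 u) i =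
          ∑ i, (p.1 i - q.1 i) * f p.1 u i - ∑ i, (p.1 i - q.1 i) * f q.1 u i := by
        rw [← Finset.sum_sub_distrib]
        exact Finset.sum_congr rfl fun i _ => by simp [mul_sub]
      have j3 : ‖p.1 - q.1‖ * ‖f p.1 u - f q.1 u‖ ≤ K * qd p q := by
        have k1 := f_lip hf p.1 q.1 u
        have k2 : ‖p.1 - q.1‖ ^ 2 ≤ qd p q := by
          have := norm_sq_le (p.1 - q.1)
          have h2 := sq_nonneg (p.2 - q.2)
          unfold qd
          simp only [Pi.sub_apply] at this
          linarith
        calc _ ≤ ‖p.1 - q.1‖ * (K * ‖p.1 - q.1‖) := by gcongr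
          _ = K * ‖p.1 - q.1‖ ^ 2 := by ring
          _ ≤ _ := by gcongr
      have j4 : (n:ℝ) * (‖p.1 - q.1‖ * ‖f p.1 u - f q.1 u‖) ≤ n * (K * qd p q) := by gcongr
      linarith
    have i4 := mul_le_mul_of_nonneg_left i3 hN
    simp only [mul_zero, add_zero] at i1 ⊢
    linarith
  rw [e1] at hsub
  rw [e2] at hsup
  simp only [Pi.zero_apply, mul_zero, Finset.sum_const_zero, zero_add, mul_one] at hsub hsup
  linarith

set_option maxHeartbeats 2000000 in
theorem comparison {f : (Fin n → ℝ) → (Fin m → ℝ) → Fin n → ℝ} {U : Set (Fin m → ℝ)} {K : NNReal}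
    (hU : IsCompact U) (hUne : U.Nonempty) (hf : LipschitzWith K (Function.uncurry f))
    {α : ℝ → ℝ} (hα : IsLocallyLipschitzClassK α)
    {g : (Fin n → ℝ) → ℝ} (hg : Continuous g) {w₁ w₂ : (Fin n → ℝ) × ℝ → ℝ}
    (c₁ : ContinuousOn w₁ {p : (Fin n → ℝ) × ℝ | 0 ≤ p.2})
    (c₂ : ContinuousOn w₂ {p : (Fin n → ℝ) × ℝ | 0 ≤ p.2})
    (n₁ : ∀ p : (Fin n → ℝ) × ℝ, 0 ≤ p.2 → 0 ≤ w₁ p)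
    (n₂ : ∀ p : (Fin n → ℝ) × ℝ, 0 ≤ p.2 → 0 ≤ w₂ p)
    (i₁ : ∀ x, w₁ (x, 0) = g x) (i₂ : ∀ x, w₂ (x, 0) = g x)
    (s₁ : IsViscositySolnCBVF f U α g w₁) (s₂ : IsViscositySolnCBVF f U α g w₂) :
    ∀ p : (Fin n → ℝ) × ℝ, 0 ≤ p.2 → w₁ p ≤ w₂ p := by
  intro p₀ hp₀
  by_contra hcon
  push Not at hcon
  obtain ⟨C, hC0, hC⟩ := f_bound hU hf
  set c : ℝ := 2 * n * (C + K) + 1 with hc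
  have hc1 : 1 ≤ c := by
    have : 0 ≤ 2 * n * (C + K) := by positivity
    linarith
  set R := cone c p₀ with hR
  set D : Set ((Fin n → ℝ) × ℝ) := {p | 0 ≤ p.2 ∧ cone c p ≤ R + 1} with hDdef
  have hcone : Continuous (cone c : (Fin n → ℝ) × ℝ → ℝ) := (cone_contDiff c).continuous
  have hp₀D : p₀ ∈ D := ⟨hp₀, by linarith⟩
  have hR0 : 0 ≤ R := by rw [hR, cone]; positivity
  have hDsub : D ⊆ {p | 0 ≤ p.2} := fun p hp => hp.1
  have hDc : IsCompact D := by
    refine Metric.isCompact_of_isClosed_isBounded ?_ ?_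
    · exact (isClosed_le continuous_const continuous_snd).inter
        (isClosed_le hcone continuous_const)
    · refine (Metric.isBounded_closedBall (x := (0 : (Fin n → ℝ) × ℝ)) (r := R + 1)).subset ?_
      rintro p ⟨ht, hp⟩
      rw [mem_closedBall_zero_iff, Prod.norm_def]
      unfold cone at hp
      have h1 := norm_sq_le p.1
      have h2 : 1 + p.2 ≤ Real.exp (c * p.2) := by
        have := Real.add_one_le_exp (c * p.2)
        nlinarith
      have h3 : 0 ≤ ‖p.1‖ ^ 2 := sq_nonneg _
      have h4 : (1 + p.2) * (1 + ‖p.1‖ ^ 2) ≤ R + 1 :=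
        le_trans (by gcongr) hp
      refine max_le ?_ ?_
      · nlinarith [sq_nonneg (‖p.1‖ - 1), mul_nonneg ht h3]
      · rw [Real.norm_of_nonneg ht]
        nlinarith [mul_nonneg ht h3]
  obtain ⟨G₁, hG₁⟩ := hDc.exists_bound_of_continuousOn (c₁.mono hDsub)
  obtain ⟨G₂, hG₂⟩ := hDc.exists_bound_of_continuousOn (c₂.mono hDsub)
  set G := max G₁ G₂ with hG
  have hw₁ : ∀ p ∈ D, w₁ p ∈ Icc 0 G := fun p hp =>
    ⟨n₁ p hp.1, (le_abs_self _).trans ((hG₁ p hp).trans (le_max_left _ _))⟩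
  have hw₂ : ∀ p ∈ D, w₂ p ∈ Icc 0 G := fun p hp =>
    ⟨n₂ p hp.1, (le_abs_self _).trans ((hG₂ p hp).trans (le_max_right _ _))⟩
  have hG0 : 0 ≤ G := (hw₁ _ hp₀D).1.trans (hw₁ _ hp₀D).2
  obtain ⟨L, hL⟩ := alpha_lip hα G
  set δ := (w₁ p₀ - w₂ p₀) / 2 with hδ
  have hδ0 : 0 < δ := by linarith
  set k := L + 1 + G / δ with hk
  have hk0 : 0 < k := by positivity
  have hkL : (L:ℝ) < k := by
    have : 0 ≤ G / δ := by positivity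
    linarith
  have hδk : G < δ * Real.exp k := by
    have h1 := Real.add_one_le_exp k
    have h2 : G = δ * (G / δ) := by field_simp
    have h3 : G / δ < Real.exp k := by
      have : (0:ℝ) ≤ L := L.2
      linarith
    calc G = δ * (G / δ) := h2
      _ < _ := by gcongr
  set χ : (Fin n → ℝ) × ℝ → ℝ := barr c k R δ with hχ
  have hχD : ContDiff ℝ 1 χ := barr_contDiff c k R δ
  have hχ0 : ∀ p, 0 < χ p := fun p => by rw [hχ, barr]; positivity
  have hχp₀ : χ p₀ = δ := by simp [hχ, barr, hR]
  obtain ⟨p₁, hp₁, hmax⟩ := hDc.exists_isMaxOn ⟨p₀, hp₀D⟩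
    (((c₁.mono hDsub).sub (c₂.mono hDsub)).div hχD.continuous.continuousOn
      (fun p _ => (hχ0 p).ne'))
  set θ := (w₁ p₁ - w₂ p₁) / χ p₁ with hθ
  have hmax' : ∀ p ∈ D, (w₁ p - w₂ p) / χ p ≤ θ := fun p hp => hmax hp
  have hθ1 : 1 < θ := by
    have := hmax' p₀ hp₀D
    rw [hχp₀] at this
    have h2 : (w₁ p₀ - w₂ p₀) / δ = 2 := by
      have : w₁ p₀ - w₂ p₀ = 2 * δ := by rw [hδ]; ring
      rw [this]; field_simp
    linarith
  have hθ0 : 0 < θ := by linarith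
  set ψ : (Fin n → ℝ) × ℝ → ℝ := fun p => θ * χ p with hψ
  have hψD : ContDiff ℝ 1 ψ := contDiff_const.mul hχD
  have hle : ∀ p ∈ D, w₁ p - w₂ p - ψ p ≤ 0 := by
    intro p hp
    have := hmax' p hp
    rw [div_le_iff₀ (hχ0 p)] at this
    simp only [hψ]
    linarith
  have heq : w₁ p₁ - w₂ p₁ - ψ p₁ = 0 := by
    have : θ * χ p₁ = w₁ p₁ - w₂ p₁ := by rw [hθ]; exact div_mul_cancel₀ _ (hχ0 p₁).ne'
    simp only [hψ]
    linarith
  obtain ⟨N, a, b, z, hzD, hN, haD, hbD, ha, hb, hNq, hmaxN, hz⟩ :=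
    doubling hDc (c₁.mono hDsub) (c₂.mono hDsub) hψD.continuous hle ⟨p₁, hp₁, heq⟩
  have hψz : 0 < ψ z := mul_pos hθ0 (hχ0 z)
  have hz2 : 0 < z.2 := by
    rcases hzD.1.eq_or_lt with h | h
    · exfalso
      have e : z = (z.1, 0) := Prod.ext rfl h.symm
      rw [e, i₁, i₂, ← e] at hz
      linarith
    · exact h
  have hzc : cone c z < R + 1 := by
    rcases hzD.2.eq_or_lt with h | h
    · exfalso
      have e : χ z = δ * Real.exp k := by
        rw [hχ, barr, h]; congr 2; ring
      have e2 : χ z ≤ ψ z := by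
        have := hχ0 z
        simp only [hψ]
        nlinarith
      linarith [(hw₁ z hzD).2, (hw₂ z hzD).1]
    · exact h
  have hOo : IsOpen {p : (Fin n → ℝ) × ℝ | 0 < p.2 ∧ cone c p < R + 1} :=
    (isOpen_lt continuous_const continuous_snd).inter (isOpen_lt hcone continuous_const)
  have hOD : {p : (Fin n → ℝ) × ℝ | 0 < p.2 ∧ cone c p < R + 1} ⊆ D :=
    fun p hp => ⟨hp.1.le, hp.2.le⟩
  have hOz := hOo.mem_nhds (show z ∈ {p : (Fin n → ℝ) × ℝ | 0 < p.2 ∧ cone c p < R + 1} from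
    ⟨hz2, hzc⟩)
  have hw₁lim : Tendsto (fun j => w₁ (a j)) atTop (𝓝 (w₁ z)) :=
    ((c₁.mono hDsub) z hzD).tendsto.comp (tendsto_nhdsWithin_iff.2
      ⟨ha, Eventually.of_forall haD⟩)
  have hw₂lim : Tendsto (fun j => w₂ (b j)) atTop (𝓝 (w₂ z)) :=
    ((c₂.mono hDsub) z hzD).tendsto.comp (tendsto_nhdsWithin_iff.2
      ⟨hb, Eventually.of_forall hbD⟩)
  have hga : Tendsto (fun j => g (a j).1) atTop (𝓝 (g z.1)) :=
    ((hg.comp continuous_fst).tendsto z).comp ha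
  have hgb : Tendsto (fun j => g (b j).1) atTop (𝓝 (g z.1)) :=
    ((hg.comp continuous_fst).tendsto z).comp hb
  have hev : ∀ᶠ j in atTop, w₂ (b j) - w₁ (a j) + (g (a j).1 - g (b j).1) < 0 := by
    refine ((hw₂lim.sub hw₁lim).add (hga.sub hgb)).eventually_lt_const ?_
    linarith
  have hfinal : ∀ᶠ j in atTop, k * ψ (a j) ≤
      2 * n * K * (N j * qd (a j) (b j)) + L * |w₁ (a j) - w₂ (b j)| := by
    filter_upwards [hev, ha.eventually hOz, hb.eventually hOz] with j hj haj hbj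
    have hDa : D ∈ 𝓝 (a j) := mem_of_superset (hOo.mem_nhds haj) hOD
    have hDb : D ∈ 𝓝 (b j) := mem_of_superset (hOo.mem_nhds hbj) hOD
    have t1 := s₁.1 (a j) haj.1 (fun y => ψ y + N j * qd y (b j))
      (hψD.add (contDiff_const.mul (qd_contDiff (b j)))) (by
        filter_upwards [hDa] with p hp
        have := hmaxN j p hp (b j) (hbD j)
        linarith)
    have t2 := s₂.2 (b j) hbj.1 (fun y => -N j * qd (a j) y)
      (contDiff_const.mul (qd_contDiff' (a j))) (by
        filter_upwards [hDb] with q hq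
        have := hmaxN j (a j) (haD j) q hq
        linarith)
    obtain ⟨t1a, t1b⟩ := max_le_iff.1 t1
    have t2' := (le_max_iff.1 t2).resolve_right (by linarith)
    have key := key_ineq hU hUne hf hψD (hN j) t1a t2' (M := k * ψ (a j)) (by
      intro u hu
      have d : ∀ w, fderiv ℝ ψ (a j) w = θ * fderiv ℝ χ (a j) w := by
        intro w
        rw [hψ, fderiv_const_mul ((hχD.differentiable one_ne_zero) (a j))]
        rfl
      rw [d, d, hχ, fderiv_barr, fderiv_barr, ← hχ]
      simp only [Pi.zero_apply, mul_zero, Finset.sum_const_zero, add_zero, mul_one, zero_mul,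
        zero_add]
      set x := (a j).1
      set ss := ∑ i, x i ^ 2
      have b1 := dot_le x (f x u)
      have b2 := hC u hu x
      have b3 := norm_sq_le x
      have b4 : ‖x‖ * ‖f x u‖ ≤ (C + K) * (1 + ss) := by
        have : ‖x‖ * ‖f x u‖ ≤ ‖x‖ * (C + K * ‖x‖) := by gcongr
        have h1 : ‖x‖ ≤ 1 + ss := by nlinarith [sq_nonneg (‖x‖ - 1)]
        have h2 : ‖x‖ ^ 2 ≤ 1 + ss := by linarith
        have h3 := mul_le_mul_of_nonneg_left h1 hC0
        have h4 := mul_le_mul_of_nonneg_left h2 (NNReal.coe_nonneg K)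
        have h5 : ‖x‖ * (C + K * ‖x‖) = C * ‖x‖ + K * ‖x‖ ^ 2 := by ring
        have h6 : (C + K) * (1 + ss) = C * (1 + ss) + K * (1 + ss) := by ring
        linarith
      have b5 : (n:ℝ) * (‖x‖ * ‖f x u‖) ≤ n * ((C + K) * (1 + ss)) := by gcongr
      have hss : 0 ≤ ss := by positivity
      have b6 : 1 ≤ c * (1 + ss) - 2 * ∑ i, x i * f x u i := by
        rw [hc]
        nlinarith
      have b7 : 1 ≤ Real.exp (c * (a j).2) :=
        Real.one_le_exp (mul_nonneg (by linarith) haj.1.le)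
      have b8 : 1 ≤ Real.exp (c * (a j).2) * (c * (1 + ss) - 2 * ∑ i, x i * f x u i) := by
        nlinarith
      have b9 : 0 ≤ k * ψ (a j) := mul_nonneg hk0.le (mul_nonneg hθ0.le (hχ0 _).le)
      calc k * ψ (a j) ≤ k * ψ (a j) *
            (Real.exp (c * (a j).2) * (c * (1 + ss) - 2 * ∑ i, x i * f x u i)) :=
              le_mul_of_one_le_right b9 b8
        _ = _ := by simp only [hψ]; ring)
    have hl := hL.dist_le_mul _ (hw₁ _ (haD j)) _ (hw₂ _ (hbD j))
    rw [Real.dist_eq, Real.dist_eq] at hl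
    have := le_abs_self (α (w₁ (a j)) - α (w₂ (b j)))
    linarith
  have lim1 : Tendsto (fun j => k * ψ (a j)) atTop (𝓝 (k * ψ z)) :=
    ((hψD.continuous.tendsto z).comp ha).const_mul k
  have lim2 := (hNq.const_mul (2 * n * K : ℝ)).add
    (((hw₁lim.sub hw₂lim).abs).const_mul (L:ℝ))
  have fin := le_of_tendsto_of_tendsto lim1 lim2 hfinal
  have e : w₁ z - w₂ z = ψ z := by linarith
  rw [e, abs_of_pos hψz, mul_zero, zero_add] at fin
  nlinarith

end Comparison


/-- The CB-VF `v` corresponding to `g` and `α` (defined implicitly by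
`β_α (v (x,T)) T = cbvfPayoff f U β g x T`) is continuous on `ℝⁿ × [0,∞)`, satisfies
`v (·,0) = g`, is a viscosity solution on `ℝⁿ × (0,∞)` of
`max { ∂_T v - H_α(x, v, ∇v), v - g x } = 0`, and is the unique continuous nonnegative
function with these properties. -/
theorem cbvf_is_unique_viscosity_solution {n m : ℕ}
    (f : (Fin n → ℝ) → (Fin m → ℝ) → Fin n → ℝ) (U : Set (Fin m → ℝ))
    (hU : IsCompact U) (hUne : U.Nonempty)
    (hf : ∃ K : NNReal, LipschitzOnWith K (Function.uncurry f) (Set.univ ×ˢ U))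
    (α : ℝ → ℝ) (hα : IsLocallyLipschitzClassK α)
    (β : ℝ → ℝ → ℝ) (hβ : IsBetaFor α β)
    (g : (Fin n → ℝ) → ℝ) (hg : Continuous g) (hg0 : ∀ x, 0 ≤ g x)
    (v : (Fin n → ℝ) × ℝ → ℝ)
    (hv : ∀ x : Fin n → ℝ, ∀ T : ℝ, 0 ≤ T →
      0 ≤ v (x, T) ∧ β (v (x, T)) T = cbvfPayoff f U β g x T) :
    ContinuousOn v {p : (Fin n → ℝ) × ℝ | 0 ≤ p.2} ∧
    (∀ x : Fin n → ℝ, v (x, 0) = g x) ∧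
    IsViscositySolnCBVF f U α g v ∧
    ∀ v' : (Fin n → ℝ) × ℝ → ℝ,
      ContinuousOn v' {p : (Fin n → ℝ) × ℝ | 0 ≤ p.2} →
      (∀ p : (Fin n → ℝ) × ℝ, 0 ≤ p.2 → 0 ≤ v' p) →
      (∀ x : Fin n → ℝ, v' (x, 0) = g x) →
      IsViscositySolnCBVF f U α g v' →
      ∀ p : (Fin n → ℝ) × ℝ, 0 ≤ p.2 → v' p = v p := by
  obtain ⟨K, hK⟩ := hf
  obtain ⟨F, hF, hEq⟩ := hK.extend_pi
  set f' : (Fin n → ℝ) → (Fin m → ℝ) → Fin n → ℝ := fun x u => F (x, u) with hf'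
  have hff : ∀ x, ∀ u ∈ U, f x u = f' x u := fun x u hu => hEq (show (x, u) ∈ univ ×ˢ U from ⟨trivial, hu⟩)
  have hF' : LipschitzWith K (Function.uncurry f') := hF
  have htr : ∀ x u ξ, IsControl U u → (IsTrajectory f x u ξ ↔ IsTrajectory f' x u ξ) := by
    intro x u ξ hu
    have : ∀ t : ℝ, 0 ≤ t → ∫ s in (0 : ℝ)..t, f (ξ s) (u s) = ∫ s in (0 : ℝ)..t, f' (ξ s) (u s) := by
      intro t ht
      refine intervalIntegral.integral_congr fun s hs => ?_
      rw [uIcc_of_le ht] at hs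
      exact hff _ _ (hu.2 s hs.1)
    constructor
    · rintro ⟨h1, h2⟩
      exact ⟨h1, fun t ht => by rw [h2 t ht, this t ht]⟩
    · rintro ⟨h1, h2⟩
      exact ⟨h1, fun t ht => by rw [h2 t ht, this t ht]⟩
  have hpay : ∀ x T, cbvfPayoff f U β g x T = cbvfPayoff f' U β g x T := by
    intro x T
    unfold cbvfPayoff
    congr 1
    ext y
    constructor
    · rintro ⟨u, ξ, hu, hξ, hy⟩
      exact ⟨u, ξ, hu, (htr x u ξ hu).1 hξ, hy⟩
    · rintro ⟨u, ξ, hu, hξ, hy⟩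
      exact ⟨u, ξ, hu, (htr x u ξ hu).2 hξ, hy⟩
  have hvisc : ∀ w : (Fin n → ℝ) × ℝ → ℝ,
      IsViscositySolnCBVF f U α g w ↔ IsViscositySolnCBVF f' U α g w := by
    intro w
    have himg : ∀ (p : (Fin n → ℝ) × ℝ) (φ : (Fin n → ℝ) × ℝ → ℝ),
        (fun u => fderiv ℝ φ p (f p.1 u, 0)) '' U = (fun u => fderiv ℝ φ p (f' p.1 u, 0)) '' U :=
      fun p φ => image_congr fun u hu => by rw [hff _ u hu]
    unfold IsViscositySolnCBVF
    simp only [himg]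
  have hv' : ∀ x : Fin n → ℝ, ∀ T : ℝ, 0 ≤ T →
      0 ≤ v (x, T) ∧ β (v (x, T)) T = cbvfPayoff f' U β g x T := fun x T hT => by
    rw [← hpay]; exact hv x T hT
  have hcont := v_cont hU hUne hF' hα hβ hg hg0 hv'
  have hinit := v_init hU hUne hF' hα hβ hg0 hv'
  have hvi := v_visc hU hUne hF' hα hβ hg hg0 hv'
  have hnn : ∀ p : (Fin n → ℝ) × ℝ, 0 ≤ p.2 → 0 ≤ v p := fun p hp => (hv' p.1 p.2 hp).1
  refine ⟨hcont, hinit, (hvisc v).2 hvi, ?_⟩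
  intro w hwc hw0 hwi hwv p hp
  have hwv' := (hvisc w).1 hwv
  exact le_antisymm
    (comparison hU hUne hF' hα hg hwc hcont hw0 hnn hwi hinit hwv' hvi p hp)
    (comparison hU hUne hF' hα hg hcont hwc hnn hw0 hinit hwi hvi hwv' p hp)
end
end

section
/- Let α be a locally Lipschitz class K function and h : ℝ^n → [0,∞) be continuous. Then h is a viscosity CBF with respect to α if and only if h is a viscosity solution of the HJ-PDE −min{ H_α(x, h, ∇h), 0 } = 0 on ℝ^n. -/
open Set Filter MeasureTheory Topology

noncomputable section

/-- A continuous nonnegative `h` is a viscosity CBF w.r.t. `α` iff it is a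
viscosity solution on `ℝⁿ` of the HJ-PDE `-min { H_α(x, h, ∇h), 0 } = 0`. -/
theorem isViscosityCBF_iff_viscosity_solution {n m : ℕ}
    (f : (Fin n → ℝ) → (Fin m → ℝ) → Fin n → ℝ) (U : Set (Fin m → ℝ))
    (hU : IsCompact U)
    (hf : ∃ K : NNReal, LipschitzOnWith K (Function.uncurry f) (Set.univ ×ˢ U))
    (α : ℝ → ℝ) (hα : IsLocallyLipschitzClassK α)
    (h : (Fin n → ℝ) → ℝ) (hh : Continuous h) (hh0 : ∀ x, 0 ≤ h x) :
    IsViscosityCBF f U α h ↔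
      ((∀ φ : (Fin n → ℝ) → ℝ, ContDiff ℝ 1 φ →
        ∀ x₀ : Fin n → ℝ, IsLocalMax (fun y => h y - φ y) x₀ →
          -min (sSup ((fun u => fderiv ℝ φ x₀ (f x₀ u)) '' U) + α (h x₀)) 0 ≤ 0) ∧
       (∀ φ : (Fin n → ℝ) → ℝ, ContDiff ℝ 1 φ →
        ∀ x₀ : Fin n → ℝ, IsLocalMin (fun y => h y - φ y) x₀ →
          0 ≤ -min (sSup ((fun u => fderiv ℝ φ x₀ (f x₀ u)) '' U) + α (h x₀)) 0)) := by
  constructor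
  · rintro ⟨-, hC⟩
    refine ⟨fun φ hφ x₀ hmax => ?_, fun φ hφ x₀ hmin => ?_⟩
    · rw [neg_nonpos, le_min_iff]
      refine ⟨?_, le_rfl⟩
      rcases (hh0 x₀).lt_or_eq with hpos | hzero
      · have := hC x₀ hpos φ hφ hmax
        linarith
      · -- at a zero of `h`, the test function has a local minimum
        have hlm : IsLocalMin φ x₀ := by
          filter_upwards [hmax] with y hy
          have h1 := hh0 y
          linarith
        have h0 : sSup ((fun u => fderiv ℝ φ x₀ (f x₀ u)) '' U) = 0 := by
          rw [hlm.fderiv_eq_zero]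
          rcases U.eq_empty_or_nonempty with rfl | hne
          · simp
          · simp [hne.image_const]
        rw [h0, ← hzero, hα.1.2.2]
        simp
    · rw [neg_nonneg]
      exact min_le_right _ _
  · rintro ⟨hS, -⟩
    refine ⟨hh, fun x hx φ hφ hmax => ?_⟩
    have := hS φ hφ x hmax
    rw [neg_nonpos, le_min_iff] at this
    linarith [this.1]
end
end

section
/- Let α be a locally Lipschitz class K function and h : ℝ^n → [0,∞) be continuous. Then h is a viscosity CBF with respect to α if and only if the CB-VF corresponding to h and α is time-invariant, that is, if and only if for every x ∈ ℝ^n and every T ≥ 0, β_α(h(x), T) = sup over pairs (u, ξ) of control signals u ∈ 𝕌 and admissible trajectories ξ from x under u of min_{t ∈ [0,T]} β_α(h(ξ(t)), T − t). -/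
open Set Filter MeasureTheory Topology

noncomputable section

/-! ### Scalar comparison flow -/

lemma cbf_sol_contract {α : ℝ → ℝ} (hα : IsClassK α) {y z : ℝ → ℝ} {a : ℝ} (ha : 0 ≤ a)
    (hy0 : ∀ t, a ≤ t → 0 ≤ y t) (hz0 : ∀ t, a ≤ t → 0 ≤ z t)
    (hy : ∀ t, a ≤ t → HasDerivWithinAt y (-α (y t)) (Set.Ici a) t)
    (hz : ∀ t, a ≤ t → HasDerivWithinAt z (-α (z t)) (Set.Ici a) t)
    {t : ℝ} (ht : a ≤ t) : |y t - z t| ≤ |y a - z a| := by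
  have hd : ∀ s, a ≤ s → HasDerivWithinAt (fun s => (y s - z s) ^ 2)
      (2 * (y s - z s) * (-α (y s) - -α (z s))) (Set.Ici a) s := by
    intro s hs
    have := ((hy s hs).sub (hz s hs)).pow 2
    refine this.congr_deriv ?_
    simp
  have hanti : AntitoneOn (fun s => (y s - z s) ^ 2) (Set.Ici a) := by
    apply antitoneOn_of_deriv_nonpos (convex_Ici a)
    · intro s hs
      exact (hd s hs).continuousWithinAt
    · intro s hs
      rw [interior_Ici] at hs
      exact ((hd s (le_of_lt hs)).hasDerivAt (Ici_mem_nhds hs)).differentiableAt.differentiableWithinAt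
    · intro s hs
      rw [interior_Ici] at hs
      rw [((hd s (le_of_lt hs)).hasDerivAt (Ici_mem_nhds hs)).deriv]
      have hs' := le_of_lt (Set.mem_Ioi.1 hs)
      rcases le_total (y s) (z s) with hle | hle
      · have := hα.2.1.monotoneOn (hy0 s hs') (hz0 s hs') hle
        nlinarith
      · have := hα.2.1.monotoneOn (hz0 s hs') (hy0 s hs') hle
        nlinarith
  have := hanti (Set.mem_Ici.2 le_rfl) (Set.mem_Ici.2 ht) ht
  exact sq_le_sq.1 this

lemma cbf_beta_nonexp {α : ℝ → ℝ} (hα : IsClassK α) {β : ℝ → ℝ → ℝ} (hβ : IsBetaFor α β)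
    {r s t : ℝ} (hr : 0 ≤ r) (hs : 0 ≤ s) (ht : 0 ≤ t) : |β r t - β s t| ≤ |r - s| := by
  have := cbf_sol_contract hα le_rfl (fun t ht => ((hβ r hr).2 t ht).1)
    (fun t ht => ((hβ s hs).2 t ht).1) (fun t ht => ((hβ r hr).2 t ht).2.2)
    (fun t ht => ((hβ s hs).2 t ht).2.2) ht
  rwa [(hβ r hr).1, (hβ s hs).1] at this

lemma cbf_beta_continuousOn {α : ℝ → ℝ} {β : ℝ → ℝ → ℝ} (hβ : IsBetaFor α β)
    {r : ℝ} (hr : 0 ≤ r) : ContinuousOn (β r) (Set.Ici 0) :=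
  fun t ht => ((hβ r hr).2 t ht).2.2.continuousWithinAt

lemma cbf_beta_mono {α : ℝ → ℝ} (hα : IsClassK α) {β : ℝ → ℝ → ℝ} (hβ : IsBetaFor α β)
    {r s t : ℝ} (hr : 0 ≤ r) (hrs : r ≤ s) (ht : 0 ≤ t) : β r t ≤ β s t := by
  by_contra! hlt
  have hs := hr.trans hrs
  have hc : ContinuousOn (fun t => β s t - β r t) (Set.Icc 0 t) :=
    ((cbf_beta_continuousOn hβ hs).sub (cbf_beta_continuousOn hβ hr)).mono Set.Icc_subset_Ici_self
  have h0 : (0 : ℝ) ∈ Set.Icc (β s t - β r t) (β s 0 - β r 0) := by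
    rw [(hβ r hr).1, (hβ s hs).1]
    constructor <;> linarith
  obtain ⟨c, hc, hc0⟩ := intermediate_value_Icc' ht hc h0
  have hsub : Set.Ici c ⊆ Set.Ici (0 : ℝ) := Set.Ici_subset_Ici.2 hc.1
  have := cbf_sol_contract hα hc.1
    (fun t ht => ((hβ r hr).2 t (hc.1.trans ht)).1)
    (fun t ht => ((hβ s hs).2 t (hc.1.trans ht)).1)
    (fun t ht => ((hβ r hr).2 t (hc.1.trans ht)).2.2.mono hsub)
    (fun t ht => ((hβ s hs).2 t (hc.1.trans ht)).2.2.mono hsub) hc.2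
  have h1 : β r c - β s c = 0 := by simp only at hc0; linarith
  rw [h1, abs_zero] at this
  have := abs_nonpos_iff.1 this
  linarith

lemma cbf_beta_shift {α : ℝ → ℝ} (hα : IsClassK α) {β : ℝ → ℝ → ℝ} (hβ : IsBetaFor α β)
    {r s t : ℝ} (hr : 0 ≤ r) (hs : 0 ≤ s) (ht : 0 ≤ t) : β (β r s) t = β r (s + t) := by
  have hb := ((hβ r hr).2 s hs).1
  have hder : ∀ t, 0 ≤ t → HasDerivWithinAt (fun t => β r (s + t)) (-α (β r (s + t)))
      (Set.Ici 0) t := by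
    intro t ht
    have h1 := ((hβ r hr).2 (s + t) (by linarith)).2.2
    have h2 : HasDerivWithinAt (fun t => s + t) 1 (Set.Ici 0) t :=
      ((hasDerivAt_id t).const_add s).hasDerivWithinAt
    have := h1.scomp t h2 (fun u hu => by simp only [Set.mem_Ici] at *; linarith)
    simpa [Function.comp_def] using this
  have := cbf_sol_contract hα le_rfl
    (fun t ht => ((hβ _ hb).2 t ht).1)
    (fun t (ht : 0 ≤ t) => ((hβ r hr).2 (s + t) (by linarith)).1)
    (fun t ht => ((hβ _ hb).2 t ht).2.2) hder ht
  rw [(hβ _ hb).1, add_zero, sub_self, abs_zero] at this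
  linarith [abs_nonpos_iff.1 this]

/-- One-sided Lipschitz estimate. -/
lemma cbf_beta_lower {α : ℝ → ℝ} (hα : IsClassK α) {β : ℝ → ℝ → ℝ} (hβ : IsBetaFor α β)
    {r s t e : ℝ} (hr : 0 ≤ r) (hs : 0 ≤ s) (he : 0 ≤ e) (hrs : s - e ≤ r) (ht : 0 ≤ t) :
    β s t - e ≤ β r t := by
  rcases le_total s r with h1 | h1
  · linarith [cbf_beta_mono hα hβ hs h1 ht]
  · have := cbf_beta_nonexp hα hβ hr hs ht
    rw [abs_sub_comm r s, abs_of_nonneg (by linarith : 0 ≤ s - r)] at this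
    linarith [(abs_le.1 this).1]

lemma cbf_beta_anti {α : ℝ → ℝ} (hα : IsClassK α) {β : ℝ → ℝ → ℝ} (hβ : IsBetaFor α β)
    {r s t : ℝ} (hr : 0 ≤ r) (hs : 0 ≤ s) (hst : s ≤ t) : β r t ≤ β r s := by
  have h1 := cbf_beta_shift hα hβ hr hs (sub_nonneg.2 hst)
  have h2 := ((hβ _ ((hβ r hr).2 s hs).1).2 (t - s) (sub_nonneg.2 hst)).2.1
  rw [h1] at h2
  simpa using h2

lemma cbf_beta_slope {α : ℝ → ℝ} (hα : IsClassK α) {β : ℝ → ℝ → ℝ} (hβ : IsBetaFor α β)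
    {r t : ℝ} (hr : 0 ≤ r) (ht : 0 ≤ t) :
    r - t * α r ≤ β r t ∧ β r t ≤ r - t * α (β r t) := by
  rcases ht.eq_or_lt with rfl | htp
  · simp [(hβ r hr).1]
  obtain ⟨c, hc, hce⟩ := exists_hasDerivAt_eq_slope (β r) (fun t => -α (β r t)) htp
    ((cbf_beta_continuousOn hβ hr).mono Set.Icc_subset_Ici_self)
    (fun s hs => ((hβ r hr).2 s hs.1.le).2.2.hasDerivAt (Ici_mem_nhds hs.1))
  rw [(hβ r hr).1, sub_zero, eq_div_iff htp.ne'] at hce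
  have hcb := (hβ r hr).2 c hc.1.le
  have htb := (hβ r hr).2 t ht
  have m1 := hα.2.1.monotoneOn hcb.1 hr hcb.2.1
  have m2 := hα.2.1.monotoneOn htb.1 hcb.1 (cbf_beta_anti hα hβ hr hc.1.le hc.2.le)
  constructor <;> nlinarith

/-! ### Dynamics -/

lemma cbf_integrable {n m : ℕ} {f : (Fin n → ℝ) → (Fin m → ℝ) → Fin n → ℝ}
    {U : Set (Fin m → ℝ)}
    (hf : ∃ K : NNReal, LipschitzOnWith K (Function.uncurry f) (Set.univ ×ˢ U))
    {K F : ℝ} {x : Fin n → ℝ} (hK : ∀ y z, ∀ v ∈ U, ‖f y v - f z v‖ ≤ K * ‖y - z‖)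
    (hF : ∀ v ∈ U, ‖f x v‖ ≤ F)
    {u : ℝ → Fin m → ℝ} (hu : IsControl U u) {ξ : ℝ → Fin n → ℝ} (hξ : Continuous ξ)
    {a b : ℝ} (ha : 0 ≤ a) (hb : 0 ≤ b) :
    IntervalIntegrable (fun s => f (ξ s) (u s)) volume a b := by
  obtain ⟨L, hL⟩ := hf
  obtain ⟨g, hg, hfg⟩ := hL.extend_pi
  have hpos : ∀ s ∈ Set.uIoc a b, 0 ≤ s := fun s hs => (le_min ha hb).trans hs.1.le
  have hdom : IntervalIntegrable (fun s => F + K * ‖ξ s - x‖) volume a b :=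
    Continuous.intervalIntegrable (by fun_prop) a b
  have hmeas : Measurable (fun s => g (ξ s, u s)) :=
    hg.continuous.measurable.comp (hξ.measurable.prodMk hu.1)
  refine hdom.mono_fun ?_ ?_
  · refine (hmeas.aestronglyMeasurable).congr ?_
    refine (ae_restrict_mem measurableSet_uIoc).mono fun s hs => ?_
    exact (hfg (show (ξ s, u s) ∈ Set.univ ×ˢ U from ⟨trivial, hu.2 s (hpos s hs)⟩)).symm
  · refine (ae_restrict_mem measurableSet_uIoc).mono fun s hs => ?_
    have hus := hu.2 s (hpos s hs)
    have h1 := hK (ξ s) x (u s) hus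
    have h2 := hF (u s) hus
    have h3 : ‖f (ξ s) (u s)‖ ≤ ‖f (ξ s) (u s) - f x (u s)‖ + ‖f x (u s)‖ := by
      simpa using norm_add_le (f (ξ s) (u s) - f x (u s)) (f x (u s))
    calc ‖f (ξ s) (u s)‖ ≤ F + K * ‖ξ s - x‖ := by linarith
      _ ≤ ‖F + K * ‖ξ s - x‖‖ := le_abs_self _

/-- A priori bound on short time intervals. -/
lemma cbf_apriori {n m : ℕ} {f : (Fin n → ℝ) → (Fin m → ℝ) → Fin n → ℝ}
    {U : Set (Fin m → ℝ)} {K F τ : ℝ} (hK0 : 0 ≤ K) {x : Fin n → ℝ}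
    (hK : ∀ y z, ∀ v ∈ U, ‖f y v - f z v‖ ≤ K * ‖y - z‖)
    (hF : ∀ v ∈ U, ‖f x v‖ ≤ F) (hτK : K * τ ≤ 1 / 2)
    {u : ℝ → Fin m → ℝ} (hu : ∀ t, 0 ≤ t → u t ∈ U) {ξ : ℝ → Fin n → ℝ}
    (hξc : ContinuousOn ξ (Set.Icc 0 τ))
    (hξ : ∀ t ∈ Set.Icc 0 τ, ξ t = x + ∫ s in (0 : ℝ)..t, f (ξ s) (u s))
    {t : ℝ} (ht : t ∈ Set.Icc 0 τ) : ‖ξ t - x‖ ≤ 2 * F * t := by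
  have hF0 : 0 ≤ F := (norm_nonneg _).trans (hF (u 0) (hu 0 le_rfl))
  have hsub : Set.Icc 0 t ⊆ Set.Icc 0 τ := Set.Icc_subset_Icc_right ht.2
  obtain ⟨s, hs, hmax⟩ := isCompact_Icc.exists_isMaxOn (Set.nonempty_Icc.2 ht.1)
    (f := fun s => ‖ξ s - x‖) ((hξc.mono hsub).sub continuousOn_const).norm
  have hb : ‖ξ s - x‖ ≤ (F + K * ‖ξ s - x‖) * s := by
    have h1 : ξ s - x = ∫ s' in (0 : ℝ)..s, f (ξ s') (u s') := by
      conv_lhs => rw [hξ s (hsub hs)]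
      simp
    have h2 : ‖∫ s' in (0 : ℝ)..s, f (ξ s') (u s')‖ ≤ (F + K * ‖ξ s - x‖) * |s - 0| := by
      apply intervalIntegral.norm_integral_le_of_norm_le_const
      intro s' hs'
      rw [Set.uIoc_of_le hs.1] at hs'
      have hus := hu s' hs'.1.le
      have h1 := hK (ξ s') x (u s') hus
      have h2 := hF (u s') hus
      have h3 : ‖f (ξ s') (u s')‖ ≤ ‖f (ξ s') (u s') - f x (u s')‖ + ‖f x (u s')‖ := by
        simpa using norm_add_le (f (ξ s') (u s') - f x (u s')) (f x (u s'))
      have h4 : ‖ξ s' - x‖ ≤ ‖ξ s - x‖ := hmax ⟨hs'.1.le, hs'.2.trans hs.2⟩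
      have := mul_le_mul_of_nonneg_left h4 hK0
      linarith
    rw [sub_zero, abs_of_nonneg hs.1, ← h1] at h2
    exact h2
  have h5 : ‖ξ t - x‖ ≤ ‖ξ s - x‖ := hmax ⟨ht.1, le_rfl⟩
  have h6 : K * s ≤ 1 / 2 := (mul_le_mul_of_nonneg_left (hs.2.trans ht.2) hK0).trans hτK
  have h7 : F * s ≤ F * t := mul_le_mul_of_nonneg_left hs.2 hF0
  have h8 := norm_nonneg (ξ s - x)
  nlinarith

/-- Short-time solution for a constant control. -/
lemma cbf_local_sol {n m : ℕ} {f : (Fin n → ℝ) → (Fin m → ℝ) → Fin n → ℝ}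
    {U : Set (Fin m → ℝ)} {K τ : ℝ} (hK0 : 0 ≤ K)
    (hK : ∀ y z, ∀ v ∈ U, ‖f y v - f z v‖ ≤ K * ‖y - z‖) (hτ : 0 ≤ τ)
    (hτK : K * τ ≤ 1 / 2) {v : Fin m → ℝ} (hv : v ∈ U) (z : Fin n → ℝ) :
    ∃ η : ℝ → Fin n → ℝ, ContinuousOn η (Set.Icc 0 τ) ∧ η 0 = z ∧
      ∀ t ∈ Set.Icc 0 τ, η t = z + ∫ s in (0 : ℝ)..t, f (η s) v := by
  set F := ‖f z v‖ with hFdef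
  have hF0 : 0 ≤ F := norm_nonneg _
  have hlip : LipschitzWith ⟨K, hK0⟩ (fun y => f y v) :=
    LipschitzWith.of_dist_le_mul fun y z => by
      rw [dist_eq_norm, dist_eq_norm]
      exact hK y z v hv
  have hpl : IsPicardLindelof (fun _ : ℝ => fun y => f y v)
      (⟨0, Set.left_mem_Icc.2 hτ⟩ : Set.Icc (0 : ℝ) τ) z
      ⟨2 * F * τ, by positivity⟩ 0 ⟨2 * F, by positivity⟩ ⟨K, hK0⟩ := by
    apply IsPicardLindelof.of_time_independent
    · intro y hy
      rw [Metric.mem_closedBall, dist_eq_norm] at hy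
      have hy' : ‖y - z‖ ≤ 2 * F * τ := hy
      have h1 := hK y z v hv
      have h3 : ‖f y v‖ ≤ ‖f y v - f z v‖ + ‖f z v‖ := by
        simpa using norm_add_le (f y v - f z v) (f z v)
      have h4 := mul_le_mul_of_nonneg_left hy' hK0
      change ‖f y v‖ ≤ 2 * F
      nlinarith
    · exact hlip.lipschitzOnWith
    · change 2 * F * max (τ - 0) (0 - 0) ≤ 2 * F * τ - 0
      rw [sub_zero, sub_zero, max_eq_left hτ, sub_zero]
  obtain ⟨η, h0, hd⟩ := hpl.exists_eq_forall_mem_Icc_hasDerivWithinAt₀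
  have hc : ContinuousOn η (Set.Icc 0 τ) := fun t ht => (hd t ht).continuousWithinAt
  refine ⟨η, hc, h0, fun t ht => ?_⟩
  have hsub : Set.Icc 0 t ⊆ Set.Icc 0 τ := Set.Icc_subset_Icc_right ht.2
  have := intervalIntegral.integral_eq_sub_of_hasDerivAt_of_le ht.1 (hc.mono hsub)
    (f' := fun s => f (η s) v)
    (fun s hs => (hd s (hsub ⟨hs.1.le, hs.2.le⟩)).hasDerivAt
      (Icc_mem_nhds hs.1 (hs.2.trans_le ht.2)))
    (by
      apply ContinuousOn.intervalIntegrable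
      rw [Set.uIcc_of_le ht.1]
      exact hlip.continuous.comp_continuousOn (hc.mono hsub))
  rw [this]
  have h0' : η 0 = z := h0
  rw [h0']
  abel

/-- Concatenation of constant-control pieces along a uniform grid. -/
lemma cbf_concat {n m : ℕ} {f : (Fin n → ℝ) → (Fin m → ℝ) → Fin n → ℝ}
    {U : Set (Fin m → ℝ)}
    (hf : ∃ K : NNReal, LipschitzOnWith K (Function.uncurry f) (Set.univ ×ˢ U))
    {K F τ : ℝ} {x : Fin n → ℝ} (hK : ∀ y z, ∀ v ∈ U, ‖f y v - f z v‖ ≤ K * ‖y - z‖)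
    (hF : ∀ v ∈ U, ‖f x v‖ ≤ F) (hτ : 0 < τ)
    (κ : (Fin n → ℝ) → Fin m → ℝ) (hκ : ∀ z, κ z ∈ U)
    (η : (Fin n → ℝ) → ℝ → Fin n → ℝ) (hηc : ∀ z, ContinuousOn (η z) (Set.Icc 0 τ))
    (hη0 : ∀ z, η z 0 = z)
    (hη : ∀ z, ∀ t ∈ Set.Icc 0 τ, η z t = z + ∫ s in (0 : ℝ)..t, f (η z s) (κ z)) :
    ∃ u ξ, ∃ X : ℕ → Fin n → ℝ, IsControl U u ∧ IsTrajectory f x u ξ ∧ X 0 = x ∧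
      (∀ i, X (i + 1) = η (X i) τ) ∧
      ∀ i : ℕ, ∀ t ∈ Set.Icc 0 τ, ξ (i * τ + t) = η (X i) t := by
  let X : ℕ → Fin n → ℝ := fun i => Nat.rec x (fun _ z => η z τ) i
  have hX0 : X 0 = x := rfl
  have hXs : ∀ i, X (i + 1) = η (X i) τ := fun i => rfl
  let u : ℝ → Fin m → ℝ := fun t => κ (X ⌊t / τ⌋₊)
  let ξ : ℝ → Fin n → ℝ := fun t => η (X ⌊(max t 0) / τ⌋₊) (max t 0 - ⌊(max t 0) / τ⌋₊ * τ)
  have hu : IsControl U u := by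
    refine ⟨?_, fun t _ => hκ _⟩
    exact (measurable_from_nat (f := fun i => κ (X i))).comp
      (Nat.measurable_floor.comp (measurable_id.div_const τ))
  have hfl : ∀ i : ℕ, ∀ t, 0 ≤ t → t < τ → ⌊(i * τ + t) / τ⌋₊ = i := by
    intro i t h0 h1
    rw [Nat.floor_eq_iff (by positivity)]
    constructor
    · rw [le_div_iff₀ hτ]; linarith
    · rw [div_lt_iff₀ hτ]; linarith
  have hξv : ∀ i : ℕ, ∀ t ∈ Set.Icc 0 τ, ξ (i * τ + t) = η (X i) t := by
    intro i t ht
    have hnn : (0 : ℝ) ≤ i * τ + t := by have := ht.1; positivity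
    rcases ht.2.eq_or_lt with h | h
    · subst h
      have : ((i : ℝ) * t + t) = ((i + 1 : ℕ) : ℝ) * t + 0 := by push_cast; ring
      simp only [ξ]
      rw [max_eq_left hnn, this, hfl (i + 1) 0 le_rfl hτ]
      simp [hη0, hXs]
    · simp only [ξ]
      rw [max_eq_left hnn, hfl i t ht.1 h]
      simp
  have hξv' : ∀ i : ℕ, ∀ t ∈ Set.Icc (i * τ) ((i + 1) * τ), ξ t = η (X i) (t - i * τ) := by
    intro i t ht
    rw [← hξv i (t - i * τ) ⟨by linarith [ht.1], by linarith [ht.2]⟩]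
    congr 1; ring
  have hneg : ∀ t ≤ 0, ξ t = x := by
    intro t ht
    simp only [ξ]
    rw [max_eq_right ht]
    simp [hX0, hη0]
  have hcon : ∀ i : ℕ, ContinuousOn ξ (Set.Iic (i * τ)) := by
    intro i
    induction i with
    | zero =>
      apply (continuousOn_const (c := x)).congr
      intro t ht
      apply hneg
      simpa using ht
    | succ i ih =>
      have h1 : ContinuousOn ξ (Set.Icc (i * τ) ((i + 1) * τ)) := by
        have : ContinuousOn (fun t => η (X i) (t - i * τ)) (Set.Icc (i * τ) ((i + 1) * τ)) := by
          apply (hηc (X i)).comp (by fun_prop)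
          intro t ht
          exact ⟨by linarith [ht.1], by linarith [ht.2]⟩
        exact this.congr (hξv' i)
      have h2 := ih.union_of_isClosed h1 isClosed_Iic isClosed_Icc
      rw [Set.Iic_union_Icc_eq_Iic (by nlinarith)] at h2
      push_cast
      exact h2
  have hξc : Continuous ξ := by
    rw [continuous_iff_continuousAt]
    intro t
    obtain ⟨N, hN⟩ := exists_nat_gt (t / τ)
    rw [div_lt_iff₀ hτ] at hN
    exact (hcon N).continuousAt (Iic_mem_nhds hN)
  have hpiece : ∀ i : ℕ, ∀ t ∈ Set.Icc 0 τ,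
      ∫ s in (i * τ : ℝ)..(i * τ + t), f (ξ s) (u s) = η (X i) t - X i := by
    intro i t ht
    have e1 : ∫ s in (i * τ : ℝ)..(i * τ + t), f (ξ s) (u s)
        = ∫ s in (0 : ℝ)..t, f (ξ (i * τ + s)) (u (i * τ + s)) := by
      have := intervalIntegral.integral_comp_add_left (a := 0) (b := t)
        (fun s => f (ξ s) (u s)) (i * τ)
      rw [this, add_zero]
    rw [e1]
    have e2 : ∫ s in (0 : ℝ)..t, f (ξ (i * τ + s)) (u (i * τ + s))
        = ∫ s in (0 : ℝ)..t, f (η (X i) s) (κ (X i)) := by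
      apply intervalIntegral.integral_congr_Ioo_of_le ht.1
      intro s hs
      have hs2 : s < τ := hs.2.trans_le ht.2
      simp only
      rw [hξv i s ⟨hs.1.le, hs2.le⟩]
      simp only [u]
      rw [hfl i s hs.1.le hs2]
    rw [e2, hη (X i) t ht]
    simp
  have hint : ∀ i : ℕ, ∀ t ∈ Set.Icc 0 τ,
      ξ (i * τ + t) = x + ∫ s in (0 : ℝ)..(i * τ + t), f (ξ s) (u s) := by
    intro i
    induction i with
    | zero =>
      intro t ht
      have := hpiece 0 t ht
      have h2 := hξv 0 t ht
      simp only [Nat.cast_zero, zero_mul, zero_add] at this h2 ⊢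
      rw [this, h2, hX0]; abel
    | succ i ih =>
      intro t ht
      have h1 := ih τ ⟨hτ.le, le_rfl⟩
      have h2 := hpiece (i + 1) t ht
      have h3 : ((i : ℝ) * τ + τ) = ((i + 1 : ℕ) : ℝ) * τ := by push_cast; ring
      rw [hξv i τ ⟨hτ.le, le_rfl⟩, ← hXs, h3] at h1
      have hp : (0 : ℝ) ≤ ((i + 1 : ℕ) : ℝ) * τ := by positivity
      rw [← intervalIntegral.integral_add_adjacent_intervals
        (cbf_integrable hf hK hF hu hξc le_rfl hp)
        (cbf_integrable hf hK hF hu hξc hp (add_nonneg hp ht.1)), h2, ← add_assoc, ← h1,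
        hξv (i + 1) t ht]
      abel
  refine ⟨u, ξ, X, hu, ⟨hξc, fun t ht => ?_⟩, hX0, hXs, hξv⟩
  have h1 : (⌊t / τ⌋₊ : ℝ) * τ ≤ t := by
    have := Nat.floor_le (div_nonneg ht hτ.le)
    rwa [le_div_iff₀ hτ] at this
  have h2 : t < (⌊t / τ⌋₊ + 1 : ℝ) * τ := by
    have := Nat.lt_floor_add_one (t / τ)
    rwa [div_lt_iff₀ hτ] at this
  have := hint ⌊t / τ⌋₊ (t - ⌊t / τ⌋₊ * τ) ⟨by linarith, by linarith⟩
  rwa [add_sub_cancel] at this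

/-! ### One step of the sup-convolution scheme -/

lemma cbf_dot_le {n : ℕ} (a b : Fin n → ℝ) : |a ⬝ᵥ b| ≤ n * (‖a‖ * ‖b‖) := by
  unfold dotProduct
  calc |∑ i, a i * b i| ≤ ∑ i, |a i * b i| := Finset.abs_sum_le_sum_abs _ _
    _ ≤ ∑ _i : Fin n, ‖a‖ * ‖b‖ := by
        apply Finset.sum_le_sum
        intro i _
        rw [abs_mul]
        exact mul_le_mul (norm_le_pi_norm a i) (norm_le_pi_norm b i) (abs_nonneg _) (norm_nonneg _)
    _ = n * (‖a‖ * ‖b‖) := by simp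

lemma cbf_dot_self_nonneg {n : ℕ} (a : Fin n → ℝ) : 0 ≤ a ⬝ᵥ a :=
  Finset.sum_nonneg fun i _ => mul_self_nonneg _

lemma cbf_norm_sq_le {n : ℕ} (a : Fin n → ℝ) : ‖a‖ ^ 2 ≤ a ⬝ᵥ a := by
  have h1 : ‖a‖ ≤ Real.sqrt (a ⬝ᵥ a) := by
    rw [pi_norm_le_iff_of_nonneg (Real.sqrt_nonneg _)]
    intro i
    apply Real.le_sqrt_of_sq_le
    rw [Real.norm_eq_abs, sq_abs, sq]
    exact Finset.single_le_sum (f := fun i => a i * a i) (fun i _ => mul_self_nonneg _)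
      (Finset.mem_univ i)
  calc ‖a‖ ^ 2 ≤ Real.sqrt (a ⬝ᵥ a) ^ 2 := by gcongr
    _ = a ⬝ᵥ a := Real.sq_sqrt (cbf_dot_self_nonneg a)

lemma cbf_phi_contDiff {n : ℕ} (c : ℝ) (y : Fin n → ℝ) :
    ContDiff ℝ 1 (fun z : Fin n → ℝ => c * ((z - y) ⬝ᵥ (z - y))) := by
  simp only [dotProduct, Pi.sub_apply]
  fun_prop

lemma cbf_phi_fderiv {n : ℕ} (c : ℝ) (y p a : Fin n → ℝ) :
    fderiv ℝ (fun z : Fin n → ℝ => c * ((z - y) ⬝ᵥ (z - y))) p a = 2 * c * ((p - y) ⬝ᵥ a) := by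
  have hd : HasFDerivAt (fun z : Fin n → ℝ => c * ∑ i, (z i - y i) * (z i - y i))
      (c • ∑ i, ((p i - y i) • ContinuousLinearMap.proj (R := ℝ) (φ := fun _ : Fin n => ℝ) i
        + (p i - y i) • ContinuousLinearMap.proj (R := ℝ) (φ := fun _ : Fin n => ℝ) i)) p := by
    apply HasFDerivAt.const_mul
    apply HasFDerivAt.fun_sum
    intro i _
    have h1 : HasFDerivAt (fun z : Fin n → ℝ => z i - y i)
        (ContinuousLinearMap.proj (R := ℝ) (φ := fun _ : Fin n => ℝ) i) p :=
      (hasFDerivAt_apply i p).sub_const _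
    exact h1.mul h1
  simp only [dotProduct, Pi.sub_apply]
  rw [hd.fderiv]
  simp only [smul_apply, sum_apply,
    add_apply, ContinuousLinearMap.proj_apply, smul_eq_mul, Finset.mul_sum]
  apply Finset.sum_congr rfl
  intro i _
  ring

set_option maxHeartbeats 1000000 in
lemma cbf_key_step {n m : ℕ} {f : (Fin n → ℝ) → (Fin m → ℝ) → Fin n → ℝ}
    {U : Set (Fin m → ℝ)} (hUne : U.Nonempty)
    {α : ℝ → ℝ} (hα : IsClassK α) {β : ℝ → ℝ → ℝ} (hβ : IsBetaFor α β)
    {h : (Fin n → ℝ) → ℝ} (hh0 : ∀ x, 0 ≤ h x) (hcbf : IsViscosityCBF f U α h)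
    {K : ℝ} (hK0 : 0 ≤ K) (hK : ∀ y z, ∀ v ∈ U, ‖f y v - f z v‖ ≤ K * ‖y - z‖)
    (x₀ : Fin n → ℝ) {R C e : ℝ} (hR : 0 ≤ R) (hC : 0 ≤ C) (he : 0 < e) :
    ∃ V : (Fin n → ℝ) → ℝ, ∃ τ₀ > 0,
      (∀ y ∈ Metric.closedBall x₀ R, h y ≤ V y ∧ V y ≤ h y + e) ∧
      ∀ y ∈ Metric.closedBall x₀ R, ∃ v ∈ U, ∀ t w, 0 ≤ t → t ≤ τ₀ →
        w ∈ Metric.closedBall x₀ R → ‖w - y‖ ≤ C * t → ‖w - y - t • f y v‖ ≤ K * C * t ^ 2 →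
        β (V y) t - e * t ≤ V w := by
  have hhc := hcbf.1
  have hαm := hα.2.1.monotoneOn
  set B := Metric.closedBall x₀ (R + 1) with hB
  have hBc : IsCompact B := isCompact_closedBall _ _
  have hBne : B.Nonempty := ⟨x₀, Metric.mem_closedBall_self (by linarith)⟩
  have hRB : Metric.closedBall x₀ R ⊆ B := Metric.closedBall_subset_closedBall (by linarith)
  obtain ⟨M, hM⟩ : ∃ M, ∀ y ∈ B, h y ≤ M := by
    obtain ⟨y, _, hy⟩ := hBc.exists_isMaxOn hBne hhc.continuousOn
    exact ⟨h y, fun z hz => hy hz⟩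
  have hM0 : 0 ≤ M := (hh0 x₀).trans (hM _ (hRB (Metric.mem_closedBall_self hR)))
  have hαM : 0 ≤ α M := by
    have := hαm (Set.mem_Ici.2 le_rfl) (Set.mem_Ici.2 hM0) hM0
    rwa [hα.2.2] at this
  set c : ℝ := 4 + 2 * n * K with hc
  have hnK : 0 ≤ (n : ℝ) * K := by positivity
  have hc4 : 4 ≤ c := by rw [hc]; nlinarith
  set δ := e / c with hδ
  have hδ0 : 0 < δ := by positivity
  have hδc : δ * c = e := by rw [hδ]; field_simp
  have hδe : δ ≤ e := by nlinarith
  -- uniform continuity of `α`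
  obtain ⟨ρα, hρα, hαu⟩ : ∃ ρ > 0, ∀ a ∈ Set.Icc 0 M, ∀ b ∈ Set.Icc 0 M, |a - b| < ρ →
      |α a - α b| < δ := by
    have := isCompact_Icc.uniformContinuousOn_of_continuous
      (hα.1.mono (Set.Icc_subset_Ici_self : Set.Icc 0 M ⊆ Set.Ici 0))
    rw [Metric.uniformContinuousOn_iff] at this
    simpa [Real.dist_eq] using this δ hδ0
  set δ₂ := min δ ρα with hδ₂
  have hδ₂0 : 0 < δ₂ := lt_min hδ0 hρα
  -- uniform continuity of `h`
  obtain ⟨ρ, hρ, hhu⟩ : ∃ ρ > 0, ∀ a ∈ B, ∀ b ∈ B, dist a b < ρ → |h a - h b| < δ₂ := by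
    have := hBc.uniformContinuousOn_of_continuous hhc.continuousOn
    rw [Metric.uniformContinuousOn_iff] at this
    simpa [Real.dist_eq] using this δ₂ hδ₂0
  set ρ₁ := min ρ 1 with hρ₁
  have hρ₁0 : 0 < ρ₁ := lt_min hρ one_pos
  set ε := ρ₁ ^ 2 / (2 * (M + 1)) with hε
  have hε0 : 0 < ε := by positivity
  have hεM : 2 * ε * M < ρ₁ ^ 2 := by
    have : 2 * ε * (M + 1) = ρ₁ ^ 2 := by rw [hε]; field_simp
    nlinarith
  -- the sup-convolution
  have hex : ∀ y, ∃ p ∈ B, ∀ z ∈ B, h z - (2 * ε)⁻¹ * ((z - y) ⬝ᵥ (z - y)) ≤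
      h p - (2 * ε)⁻¹ * ((p - y) ⬝ᵥ (p - y)) := by
    intro y
    have hcont : Continuous (fun z => h z - (2 * ε)⁻¹ * ((z - y) ⬝ᵥ (z - y))) :=
      hhc.sub (cbf_phi_contDiff _ y).continuous
    obtain ⟨p, hp, hmax⟩ := hBc.exists_isMaxOn hBne hcont.continuousOn
    exact ⟨p, hp, fun z hz => hmax hz⟩
  choose π hπB hπmax using hex
  let V : (Fin n → ℝ) → ℝ := fun y => h (π y) - (2 * ε)⁻¹ * ((π y - y) ⬝ᵥ (π y - y))
  have hVdef : ∀ y, V y = h (π y) - (2 * ε)⁻¹ * ((π y - y) ⬝ᵥ (π y - y)) := fun y => rfl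
  have hVle : ∀ y, V y ≤ h (π y) := by
    intro y
    have := mul_nonneg (by positivity : 0 ≤ (2 * ε)⁻¹) (cbf_dot_self_nonneg (π y - y))
    linarith [hVdef y]
  have hVge : ∀ y ∈ Metric.closedBall x₀ R, h y ≤ V y := by
    intro y hy
    have := hπmax y y (hRB hy)
    rw [sub_self, dotProduct_zero, mul_zero, sub_zero] at this
    exact this
  have hq : ∀ y ∈ Metric.closedBall x₀ R, ‖π y - y‖ < ρ₁ := by
    intro y hy
    have h1 := hVge y hy
    rw [hVdef] at h1
    have h2 : (2 * ε)⁻¹ * ((π y - y) ⬝ᵥ (π y - y)) ≤ M := by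
      linarith [hM _ (hπB y), hh0 y]
    rw [inv_mul_le_iff₀ (by positivity)] at h2
    have h3 := cbf_norm_sq_le (π y - y)
    exact lt_of_pow_lt_pow_left₀ 2 hρ₁0.le (by linarith)
  have hπh : ∀ y ∈ Metric.closedBall x₀ R, h (π y) < h y + δ₂ := by
    intro y hy
    have := hhu (π y) (hπB y) y (hRB hy)
      (by rw [dist_eq_norm]; exact (hq y hy).trans_le (min_le_left _ _))
    linarith [(abs_lt.1 this).2]
  -- step size
  set A : ℝ := n * K * C + n * C ^ 2 / 2 with hA
  have hA0 : 0 ≤ A := by positivity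
  refine ⟨V, min (δ * ε / (A + 1)) (ρα / (α M + 1)), lt_min (by positivity) (by positivity), ?_, ?_⟩
  · intro y hy
    refine ⟨hVge y hy, ?_⟩
    have := hVle y
    have := hπh y hy
    have : δ₂ ≤ δ := min_le_left _ _
    linarith
  intro y hy
  have hVy0 : 0 ≤ V y := (hh0 y).trans (hVge y hy)
  rcases (hh0 (π y)).eq_or_lt with hz | hpos
  · obtain ⟨v, hv⟩ := hUne
    refine ⟨v, hv, fun t w ht _ hw _ _ => ?_⟩
    have h1 : V y = 0 := le_antisymm (hz ▸ hVle y) hVy0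
    have h2 := ((hβ (V y) hVy0).2 t ht).2.1
    have h3 := (hh0 w).trans (hVge w hw)
    have := mul_nonneg he.le ht
    linarith
  have hlm : IsLocalMax (fun z => h z - (2 * ε)⁻¹ * ((z - y) ⬝ᵥ (z - y))) (π y) := by
    have hnb : B ∈ 𝓝 (π y) := by
      apply mem_of_superset (Metric.ball_mem_nhds (π y) (ε := 1 - ‖π y - y‖)
        (by linarith [hq y hy, min_le_right ρ 1]))
      intro z hz
      rw [Metric.mem_ball] at hz
      rw [hB, Metric.mem_closedBall]
      rw [Metric.mem_closedBall] at hy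
      have t1 := dist_triangle z (π y) x₀
      have t2 := dist_triangle (π y) y x₀
      rw [dist_eq_norm (π y) y] at t2
      linarith
    filter_upwards [hnb] with z hz
    exact hπmax y z hz
  have hvis := hcbf.2 (π y) hpos _ (cbf_phi_contDiff (2 * ε)⁻¹ y) hlm
  obtain ⟨_, ⟨v, hv, rfl⟩, hlt⟩ := exists_lt_of_lt_csSup (hUne.image _)
    (show -α (h (π y)) - δ < _ by linarith)
  simp only at hlt
  rw [cbf_phi_fderiv] at hlt
  refine ⟨v, hv, fun t w ht htτ hw hwy hwe => ?_⟩
  set q := π y - y with hqdef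
  set g := f (π y) v with hg
  have hqn : ‖q‖ ^ 2 ≤ 2 * ε * δ := by
    have h1 := hVge y hy
    rw [hVdef] at h1
    have h2 : (2 * ε)⁻¹ * (q ⬝ᵥ q) ≤ δ := by
      linarith [hπh y hy, min_le_left δ ρα]
    rw [inv_mul_le_iff₀ (by positivity)] at h2
    exact (cbf_norm_sq_le q).trans h2
  have hq1 : ‖q‖ ≤ 1 := (hq y hy).le.trans (min_le_right _ _)
  have hq0 := norm_nonneg q
  have hdot : -(ε * (α (h (π y)) + δ)) ≤ q ⬝ᵥ g := by
    have h1 : 2 * (2 * ε)⁻¹ * (q ⬝ᵥ g) = ε⁻¹ * (q ⬝ᵥ g) := by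
      rw [mul_inv]; ring
    rw [h1] at hlt
    have h2 := mul_lt_mul_of_pos_left hlt hε0
    rw [mul_inv_cancel_left₀ hε0.ne'] at h2
    linarith
  have hn0 : (0 : ℝ) ≤ n := Nat.cast_nonneg n
  have hd2 : -(n * K * ‖q‖ ^ 2) ≤ q ⬝ᵥ (f y v - g) := by
    have h1 := (abs_le.1 (cbf_dot_le q (f y v - g))).1
    have h2 := hK y (π y) v hv
    rw [norm_sub_rev y] at h2
    have h3 : (n : ℝ) * (‖q‖ * ‖f y v - g‖) ≤ n * (‖q‖ * (K * ‖q‖)) := by gcongr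
    have h4 : (n : ℝ) * (‖q‖ * (K * ‖q‖)) = n * K * ‖q‖ ^ 2 := by ring
    linarith
  have hd3 : -(n * K * C * t ^ 2) ≤ q ⬝ᵥ (w - y - t • f y v) := by
    have h1 := (abs_le.1 (cbf_dot_le q (w - y - t • f y v))).1
    have h3 : (n : ℝ) * (‖q‖ * ‖w - y - t • f y v‖) ≤ n * (1 * (K * C * t ^ 2)) := by gcongr
    have h4 : (n : ℝ) * (1 * (K * C * t ^ 2)) = n * K * C * t ^ 2 := by ring
    linarith
  have hd4 : (w - y) ⬝ᵥ (w - y) ≤ n * C ^ 2 * t ^ 2 := by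
    have h1 := (abs_le.1 (cbf_dot_le (w - y) (w - y))).2
    have h3 : (n : ℝ) * (‖w - y‖ * ‖w - y‖) ≤ n * ((C * t) * (C * t)) := by gcongr
    have h4 : (n : ℝ) * ((C * t) * (C * t)) = n * C ^ 2 * t ^ 2 := by ring
    linarith
  have hexp : (π y - w) ⬝ᵥ (π y - w) = q ⬝ᵥ q - 2 * (t * (q ⬝ᵥ g) + t * (q ⬝ᵥ (f y v - g))
      + q ⬝ᵥ (w - y - t • f y v)) + (w - y) ⬝ᵥ (w - y) := by
    simp only [dotProduct, hqdef, Finset.mul_sum, ← Finset.sum_add_distrib,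
      ← Finset.sum_sub_distrib, Pi.sub_apply, Pi.smul_apply, smul_eq_mul]
    apply Finset.sum_congr rfl
    intro i _
    ring
  have hVw : V y - t * (α (h (π y)) + (2 + 2 * n * K) * δ) ≤ V w := by
    have h1 := hπmax w (π y) (hπB y)
    rw [← hVdef w] at h1
    refine le_trans ?_ h1
    rw [hVdef y]
    have htA : t * (A + 1) ≤ δ * ε := by
      have := htτ.trans (min_le_left _ _)
      rwa [le_div_iff₀ (by positivity)] at this
    have key : (π y - w) ⬝ᵥ (π y - w) ≤ q ⬝ᵥ q
        + 2 * ε * (t * (α (h (π y)) + (2 + 2 * n * K) * δ)) := by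
      rw [hexp]
      have k1 := mul_le_mul_of_nonneg_left hdot ht
      have k2 := mul_le_mul_of_nonneg_left hd2 ht
      have k3 : t * (n * K * ‖q‖ ^ 2) ≤ t * (n * K * (2 * ε * δ)) := by gcongr
      have k4 := mul_le_mul_of_nonneg_left htA ht
      have k5 : t * (t * (A + 1)) = n * K * C * t ^ 2 + n * C ^ 2 * t ^ 2 / 2 + t ^ 2 := by
        rw [hA]; ring
      have k6 := sq_nonneg t
      have k7 : 2 * ε * (t * (α (h (π y)) + (2 + 2 * n * K) * δ)) =
        2 * (t * (ε * (α (h (π y)) + δ))) + 2 * (t * (n * K * (2 * ε * δ)))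
          + 2 * (t * (δ * ε)) := by ring
      linarith
    have h2 := mul_le_mul_of_nonneg_left key (by positivity : 0 ≤ (2 * ε)⁻¹)
    rw [mul_add, inv_mul_cancel_left₀ (by positivity)] at h2
    linarith
  have hVM : V y ≤ M := (hVle y).trans (hM _ (hπB y))
  have hb := (hβ (V y) hVy0).2 t ht
  have hα1 : α (h (π y)) ≤ α (V y) + δ := by
    have := hαu (h (π y)) ⟨hpos.le, hM _ (hπB y)⟩ (V y) ⟨hVy0, hVM⟩ (by
      rw [abs_lt]
      constructor <;> linarith [hVle y, hVge y hy, hπh y hy, min_le_right δ ρα])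
    linarith [(abs_lt.1 this).2]
  have hsl := cbf_beta_slope hα hβ hVy0 ht
  have hα2 : α (V y) ≤ α (β (V y) t) + δ := by
    have := hαu (V y) ⟨hVy0, hVM⟩ (β (V y) t) ⟨hb.1, hb.2.1.trans hVM⟩ (by
      have h1 : t * (α M + 1) ≤ ρα := by
        have := htτ.trans (min_le_right _ _)
        rwa [le_div_iff₀ (by positivity)] at this
      have h2 : t * α (V y) ≤ t * α M :=
        mul_le_mul_of_nonneg_left (hαm hVy0 hM0 hVM) ht
      rcases ht.eq_or_lt with h0 | h0
      · rw [← h0, (hβ (V y) hVy0).1]; simpa using hρα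
      rw [abs_lt]
      constructor <;> nlinarith)
    linarith [(abs_lt.1 this).2]
  have hfin : t * (α (h (π y)) + (2 + 2 * n * K) * δ) ≤ t * (α (β (V y) t) + e) := by
    apply mul_le_mul_of_nonneg_left _ ht
    have k1 : (2 + 2 * n * K) * δ + 2 * δ = e := by rw [← hδc, hc]; ring
    linarith
  rw [mul_add] at hfin
  linarith

/-! ### Forward direction: almost optimal trajectories -/

lemma cbf_taylor {n m : ℕ} {f : (Fin n → ℝ) → (Fin m → ℝ) → Fin n → ℝ}
    {U : Set (Fin m → ℝ)} {K F τ : ℝ} (hK0 : 0 ≤ K) {z : Fin n → ℝ}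
    (hK : ∀ y z, ∀ v ∈ U, ‖f y v - f z v‖ ≤ K * ‖y - z‖)
    (hF : ∀ v ∈ U, ‖f z v‖ ≤ F) (hτK : K * τ ≤ 1 / 2) {v : Fin m → ℝ} (hv : v ∈ U)
    {η : ℝ → Fin n → ℝ} (hηc : ContinuousOn η (Set.Icc 0 τ))
    (hη : ∀ t ∈ Set.Icc 0 τ, η t = z + ∫ s in (0 : ℝ)..t, f (η s) v)
    {t : ℝ} (ht : t ∈ Set.Icc 0 τ) :
    ‖η t - z‖ ≤ 2 * F * t ∧ ‖η t - z - t • f z v‖ ≤ K * (2 * F) * t ^ 2 := by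
  have hF0 : 0 ≤ F := (norm_nonneg _).trans (hF v hv)
  have hap : ∀ s ∈ Set.Icc 0 τ, ‖η s - z‖ ≤ 2 * F * s := fun s hs =>
    cbf_apriori hK0 hK hF hτK (u := fun _ => v) (fun _ _ => hv) hηc hη hs
  refine ⟨hap t ht, ?_⟩
  have hsub : Set.Icc 0 t ⊆ Set.Icc 0 τ := Set.Icc_subset_Icc_right ht.2
  have hlip : LipschitzWith ⟨K, hK0⟩ (fun y => f y v) :=
    LipschitzWith.of_dist_le_mul fun y z => by
      rw [dist_eq_norm, dist_eq_norm]
      exact hK y z v hv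
  have hint : IntervalIntegrable (fun s => f (η s) v) volume 0 t := by
    apply ContinuousOn.intervalIntegrable
    rw [Set.uIcc_of_le ht.1]
    exact hlip.continuous.comp_continuousOn (hηc.mono hsub)
  have heq : η t - z - t • f z v = ∫ s in (0 : ℝ)..t, (f (η s) v - f z v) := by
    rw [intervalIntegral.integral_sub hint intervalIntegrable_const, intervalIntegral.integral_const]
    conv_lhs => rw [hη t ht]
    simp
  rw [heq]
  have : ‖∫ s in (0 : ℝ)..t, (f (η s) v - f z v)‖ ≤ (K * (2 * F * t)) * |t - 0| := by
    apply intervalIntegral.norm_integral_le_of_norm_le_const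
    intro s hs
    rw [Set.uIoc_of_le ht.1] at hs
    refine (hK _ _ v hv).trans ?_
    apply mul_le_mul_of_nonneg_left _ hK0
    refine (hap s (hsub ⟨hs.1.le, hs.2⟩)).trans ?_
    exact mul_le_mul_of_nonneg_left hs.2 (by positivity)
  rw [sub_zero, abs_of_nonneg ht.1] at this
  refine this.trans (le_of_eq ?_)
  ring

lemma cbf_forward {n m : ℕ} {f : (Fin n → ℝ) → (Fin m → ℝ) → Fin n → ℝ}
    {U : Set (Fin m → ℝ)} (hUne : U.Nonempty)
    (hf : ∃ K : NNReal, LipschitzOnWith K (Function.uncurry f) (Set.univ ×ˢ U))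
    {α : ℝ → ℝ} (hα : IsClassK α) {β : ℝ → ℝ → ℝ} (hβ : IsBetaFor α β)
    {h : (Fin n → ℝ) → ℝ} (hh0 : ∀ x, 0 ≤ h x) (hcbf : IsViscosityCBF f U α h)
    {K F : ℝ} (hK1 : 1 ≤ K) (hK : ∀ y z, ∀ v ∈ U, ‖f y v - f z v‖ ≤ K * ‖y - z‖)
    {x : Fin n → ℝ} (hF : ∀ v ∈ U, ‖f x v‖ ≤ F) {T e : ℝ} (hT : 0 < T) (he : 0 < e) :
    ∃ u ξ, IsControl U u ∧ IsTrajectory f x u ξ ∧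
      ∀ t ∈ Set.Icc 0 T, β (h x) t - e ≤ h (ξ t) := by
  have hK0 : 0 ≤ K := zero_le_one.trans hK1
  obtain ⟨v₀, hv₀⟩ := hUne
  have hF0 : 0 ≤ F := (norm_nonneg _).trans (hF v₀ hv₀)
  set E := Real.exp (2 * K * T) with hE
  have hE0 : 0 < E := Real.exp_pos _
  set e' := e / (T + 1) with he'
  have he'0 : 0 < e' := by positivity
  have he'e : e' * (T + 1) = e := by rw [he']; field_simp
  obtain ⟨V, τ₀, hτ₀, hV, hstep⟩ := cbf_key_step ⟨v₀, hv₀⟩ hα hβ hh0 hcbf hK0 hK x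
    (R := F * E) (C := 2 * (F * E)) (e := e') (by positivity) (by positivity) he'0
  have hκ : ∀ z, ∃ v ∈ U, z ∈ Metric.closedBall x (F * E) → ∀ t w, 0 ≤ t → t ≤ τ₀ →
        w ∈ Metric.closedBall x (F * E) → ‖w - z‖ ≤ 2 * (F * E) * t →
        ‖w - z - t • f z v‖ ≤ K * (2 * (F * E)) * t ^ 2 → β (V z) t - e' * t ≤ V w := by
    intro z
    by_cases hz : z ∈ Metric.closedBall x (F * E)
    · obtain ⟨v, hv, hv'⟩ := hstep z hz
      exact ⟨v, hv, fun _ => hv'⟩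
    · exact ⟨v₀, hv₀, fun h => absurd h hz⟩
  choose κ hκU hκs using hκ
  obtain ⟨N, hN⟩ := exists_nat_gt (max (T / τ₀) (2 * K * T))
  have hN1 : T / τ₀ < N := (le_max_left _ _).trans_lt hN
  have hN2 : 2 * K * T < N := (le_max_right _ _).trans_lt hN
  have hN0 : (0 : ℝ) < N := lt_trans (by positivity) hN1
  set τ := T / N with hτdef
  have hτ : 0 < τ := by positivity
  have hNτ : N * τ = T := by rw [hτdef]; field_simp
  have hττ₀ : τ ≤ τ₀ := by
    rw [div_lt_iff₀ hτ₀] at hN1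
    rw [hτdef, div_le_iff₀ hN0]; linarith
  have hτK : K * τ ≤ 1 / 2 := by
    rw [hτdef, mul_div_assoc', div_le_iff₀ hN0]; linarith
  choose η hηc hη0 hη using fun z => cbf_local_sol hK0 hK hτ.le hτK (hκU z) z
  obtain ⟨u, ξ, X, hu, hξ, hX0, hXs, hξX⟩ :=
    cbf_concat hf hK hF hτ κ hκU η hηc hη0 hη
  refine ⟨u, ξ, hu, hξ, ?_⟩
  have hr := hh0 x
  set P := 1 + 2 * K * τ with hP
  have hP1 : 1 ≤ P := by have : 0 ≤ 2 * K * τ := by positivity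
                         linarith
  have hPE : ∀ i : ℕ, i ≤ N → P ^ i ≤ E := by
    intro i hi
    calc P ^ i ≤ P ^ N := pow_le_pow_right₀ hP1 hi
      _ ≤ (Real.exp (2 * K * τ)) ^ N := by
          apply pow_le_pow_left₀ (by linarith)
          rw [hP]; linarith [Real.add_one_le_exp (2 * K * τ)]
      _ = E := by
          rw [← Real.exp_nat_mul, hE]; congr 1
          rw [← hNτ]; ring
  have hball : ∀ w : Fin n → ℝ, ∀ i : ℕ, i ≤ N → F + K * ‖w - x‖ ≤ F * P ^ i →
      w ∈ Metric.closedBall x (F * E) := by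
    intro w i hi hw
    rw [Metric.mem_closedBall, dist_eq_norm]
    have h1 := mul_le_mul_of_nonneg_left (hPE i hi) hF0
    have h2 : 1 * ‖w - x‖ ≤ K * ‖w - x‖ := mul_le_mul_of_nonneg_right hK1 (norm_nonneg _)
    linarith
  have hone : ∀ i : ℕ, i < N → F + K * ‖X i - x‖ ≤ F * P ^ i →
      β (h x) (i * τ) - e' * (i * τ) ≤ V (X i) → ∀ t ∈ Set.Icc 0 τ,
      F + K * ‖η (X i) t - x‖ ≤ F * P ^ (i + 1) ∧
      β (h x) (i * τ + t) - e' * (i * τ + t) ≤ V (η (X i) t) := by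
    intro i hi hb hVi t ht
    set z := X i with hz
    have hFz : ∀ v ∈ U, ‖f z v‖ ≤ F + K * ‖z - x‖ := by
      intro v hv
      have h1 := hK z x v hv
      have h2 := hF v hv
      have h3 : ‖f z v‖ ≤ ‖f z v - f x v‖ + ‖f x v‖ := by
        simpa using norm_add_le (f z v - f x v) (f x v)
      linarith
    set μ := F + K * ‖z - x‖ with hμ
    have hμ0 : 0 ≤ μ := by positivity
    obtain ⟨ta, tb⟩ := cbf_taylor hK0 hK hFz hτK (hκU z) (hηc z) (hη z) ht
    have hm : F + K * ‖η z t - x‖ ≤ F * P ^ (i + 1) := by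
      have h1 : ‖η z t - x‖ ≤ ‖η z t - z‖ + ‖z - x‖ := norm_sub_le_norm_sub_add_norm_sub _ _ _
      have h2 : ‖η z t - z‖ ≤ 2 * μ * τ :=
        ta.trans (mul_le_mul_of_nonneg_left ht.2 (by positivity))
      have h3 : K * ‖η z t - x‖ ≤ K * (2 * μ * τ + ‖z - x‖) :=
        mul_le_mul_of_nonneg_left (by linarith) hK0
      have h4 : μ * P ≤ F * P ^ i * P := mul_le_mul_of_nonneg_right hb (by linarith)
      have h5 : μ * P = μ + K * (2 * μ * τ) := by rw [hP]; ring
      rw [pow_succ, ← mul_assoc]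
      linarith
    refine ⟨hm, ?_⟩
    have hμE : μ ≤ F * E := hb.trans (mul_le_mul_of_nonneg_left (hPE i hi.le) hF0)
    have hzB := hball z i hi.le hb
    have hwB := hball (η z t) (i + 1) hi hm
    have ht0 := ht.1
    have hs := hκs z hzB t (η z t) ht.1 (ht.2.trans hττ₀) hwB
      (ta.trans (by gcongr)) (tb.trans (by gcongr))
    have hiτ : (0 : ℝ) ≤ i * τ := by positivity
    have hbb := ((hβ (h x) hr).2 (i * τ) hiτ).1
    have hl := cbf_beta_lower hα hβ ((hh0 z).trans (hV z hzB).1) hbb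
      (mul_nonneg he'0.le hiτ) hVi ht.1
    rw [cbf_beta_shift hα hβ hr hiτ ht.1] at hl
    linarith
  have hind : ∀ i : ℕ, i ≤ N → F + K * ‖X i - x‖ ≤ F * P ^ i ∧
      β (h x) (i * τ) - e' * (i * τ) ≤ V (X i) := by
    intro i
    induction i with
    | zero =>
      intro _
      have := (hV x (Metric.mem_closedBall_self (by positivity))).1
      simp [hX0, (hβ (h x) hr).1, this]
    | succ i ih =>
      intro hi
      obtain ⟨a, b⟩ := ih (by omega)
      have := hone i hi a b τ ⟨hτ.le, le_rfl⟩
      rw [← hXs] at this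
      have h3 : ((i : ℝ) * τ + τ) = ((i + 1 : ℕ) : ℝ) * τ := by push_cast; ring
      rwa [h3] at this
  have hcov : ∀ t ∈ Set.Icc 0 T, ∃ i : ℕ, i < N ∧ ∃ s ∈ Set.Icc 0 τ, t = i * τ + s := by
    intro t ht
    rcases ht.2.eq_or_lt with hte | hlt
    · have hNpos : 0 < N := by exact_mod_cast hN0
      refine ⟨N - 1, by omega, τ, ⟨hτ.le, le_rfl⟩, ?_⟩
      rw [hte, ← hNτ, Nat.cast_sub hNpos]; push_cast; ring
    · have h1 : (⌊t / τ⌋₊ : ℝ) * τ ≤ t := by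
        have := Nat.floor_le (div_nonneg ht.1 hτ.le)
        rwa [le_div_iff₀ hτ] at this
      have h2 : t < (⌊t / τ⌋₊ + 1 : ℝ) * τ := by
        have := Nat.lt_floor_add_one (t / τ)
        rwa [div_lt_iff₀ hτ] at this
      refine ⟨⌊t / τ⌋₊, ?_, t - ⌊t / τ⌋₊ * τ, ⟨by linarith, by linarith⟩, by ring⟩
      rw [Nat.floor_lt (div_nonneg ht.1 hτ.le), div_lt_iff₀ hτ, hNτ]
      exact hlt
  intro t ht
  obtain ⟨i, hi, s, hs, rfl⟩ := hcov t ht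
  obtain ⟨a, b⟩ := hind i hi.le
  obtain ⟨c, d⟩ := hone i hi a b s hs
  rw [hξX i s hs]
  have hwB := hball _ (i + 1) hi c
  have := (hV _ hwB).2
  have h5 := mul_le_mul_of_nonneg_left ht.2 he'0.le
  linarith

/-! ### Backward direction -/

lemma cbf_backward {n m : ℕ} {f : (Fin n → ℝ) → (Fin m → ℝ) → Fin n → ℝ}
    {U : Set (Fin m → ℝ)} (hU : IsCompact U)
    (hf : ∃ K : NNReal, LipschitzOnWith K (Function.uncurry f) (Set.univ ×ˢ U))
    {α : ℝ → ℝ} (hα : IsClassK α) {β : ℝ → ℝ → ℝ} (hβ : IsBetaFor α β)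
    {h : (Fin n → ℝ) → ℝ} (hh0 : ∀ x, 0 ≤ h x)
    {K F : ℝ} (hK1 : 1 ≤ K) (hK : ∀ y z, ∀ v ∈ U, ‖f y v - f z v‖ ≤ K * ‖y - z‖)
    {x : Fin n → ℝ} (hF : ∀ v ∈ U, ‖f x v‖ ≤ F) (hF0 : 0 ≤ F)
    (hfc : ContinuousOn (fun v => f x v) U)
    (happ : ∀ T e : ℝ, 0 < T → 0 < e → ∃ u ξ, IsControl U u ∧ IsTrajectory f x u ξ ∧
      β (h x) T - e < h (ξ T))
    {φ : (Fin n → ℝ) → ℝ} (hφ : ContDiff ℝ 1 φ) (hmax : IsLocalMax (fun y => h y - φ y) x) :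
    -α (h x) ≤ sSup ((fun u => fderiv ℝ φ x (f x u)) '' U) := by
  have hK0 : 0 ≤ K := zero_le_one.trans hK1
  set L := fderiv ℝ φ x with hL
  set S := sSup ((fun u => L (f x u)) '' U) with hS
  have hbdd : BddAbove ((fun u => L (f x u)) '' U) :=
    (hU.image_of_continuousOn (L.continuous.comp_continuousOn hfc)).bddAbove
  by_contra! hlt
  set γ := (-α (h x) - S) / 4 with hγ
  have hγ0 : 0 < γ := by rw [hγ]; linarith
  have hγS : -α (h x) = S + 4 * γ := by rw [hγ]; ring
  set γ' := γ / (2 * F + 1) with hγ'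
  have hγ'0 : 0 < γ' := by positivity
  have hγ'F : γ' * (2 * F) ≤ γ := by
    have : γ' * (2 * F + 1) = γ := by rw [hγ']; field_simp
    linarith
  have hder : HasFDerivAt φ L x := (hφ.differentiable one_ne_zero x).hasFDerivAt
  have hlit := hder.isLittleO.def hγ'0
  obtain ⟨ρ, hρ, hball⟩ := Metric.eventually_nhds_iff.1 (hlit.and hmax)
  have hLn := norm_nonneg L
  set T := min (1 / (2 * K)) (min (ρ / (2 * F + 1) / 2) (γ / (‖L‖ * K * (2 * F) + 1))) with hT
  have hT0 : 0 < T := by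
    rw [hT]
    refine lt_min (by positivity) (lt_min (by positivity) (by positivity))
  have hT1 : K * T ≤ 1 / 2 := by
    have : T ≤ 1 / (2 * K) := min_le_left _ _
    calc K * T ≤ K * (1 / (2 * K)) := by gcongr
      _ = 1 / 2 := by field_simp
  have hT2 : 2 * F * T < ρ := by
    have h1 : T ≤ ρ / (2 * F + 1) / 2 := (min_le_right _ _).trans (min_le_left _ _)
    rw [div_div, le_div_iff₀ (by positivity)] at h1
    nlinarith
  have hT3 : ‖L‖ * (K * (2 * F * T)) ≤ γ := by
    have h1 : T ≤ γ / (‖L‖ * K * (2 * F) + 1) := (min_le_right _ _).trans (min_le_right _ _)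
    rw [le_div_iff₀ (by positivity)] at h1
    nlinarith
  obtain ⟨u, ξ, hu, hξ, hb⟩ := happ T (T * γ) hT0 (by positivity)
  have hap : ∀ s ∈ Set.Icc 0 T, ‖ξ s - x‖ ≤ 2 * F * s := fun s hs =>
    cbf_apriori hK0 hK hF hT1 hu.2 hξ.1.continuousOn (fun t ht => hξ.2 t ht.1) hs
  have hapT := hap T ⟨hT0.le, le_rfl⟩
  obtain ⟨h1, h2⟩ := hball (y := ξ T) (by rw [dist_eq_norm]; linarith)
  have h3 := (cbf_beta_slope hα hβ (hh0 x) hT0.le).1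
  rw [Real.norm_eq_abs] at h1
  have h4 := (abs_le.1 h1).2
  have h5 : γ' * ‖ξ T - x‖ ≤ T * γ := by
    have : γ' * ‖ξ T - x‖ ≤ γ' * (2 * F * T) := mul_le_mul_of_nonneg_left hapT hγ'0.le
    nlinarith
  have hint := cbf_integrable hf hK hF hu hξ.1 le_rfl hT0.le
  have h6 : L (ξ T - x) ≤ T * (S + γ) := by
    have e1 : ξ T - x = ∫ s in (0 : ℝ)..T, f (ξ s) (u s) := by
      conv_lhs => rw [hξ.2 T hT0.le]
      simp
    rw [e1, ← L.intervalIntegral_comp_comm hint]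
    have : ∫ s in (0 : ℝ)..T, L (f (ξ s) (u s)) ≤ ∫ s in (0 : ℝ)..T, (S + γ) := by
      apply intervalIntegral.integral_mono_on hT0.le
      · exact ⟨L.integrable_comp hint.1, L.integrable_comp hint.2⟩
      · exact intervalIntegrable_const
      · intro s hs
        have hus := hu.2 s hs.1
        have k1 : L (f x (u s)) ≤ S := le_csSup hbdd ⟨u s, hus, rfl⟩
        have k2 : L (f (ξ s) (u s)) = L (f x (u s)) + L (f (ξ s) (u s) - f x (u s)) := by
          rw [map_sub]; ring
        have k3 : L (f (ξ s) (u s) - f x (u s)) ≤ ‖L‖ * ‖f (ξ s) (u s) - f x (u s)‖ :=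
          (le_abs_self _).trans (L.le_opNorm _)
        have k4 : ‖f (ξ s) (u s) - f x (u s)‖ ≤ K * (2 * F * T) := by
          refine (hK _ _ _ hus).trans (mul_le_mul_of_nonneg_left ?_ hK0)
          exact (hap s hs).trans (mul_le_mul_of_nonneg_left hs.2 (by positivity))
        have k5 := mul_le_mul_of_nonneg_left k4 hLn
        linarith
    rwa [intervalIntegral.integral_const, sub_zero, smul_eq_mul] at this
  have h2' : h (ξ T) - φ (ξ T) ≤ h x - φ x := h2
  have h7 : T * (-α (h x)) = T * S + 4 * (T * γ) := by rw [hγS]; ring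
  have h8 : 0 < T * γ := by positivity
  rw [mul_add] at h6
  linarith

/-- A continuous nonnegative `h` is a viscosity CBF w.r.t. `α` iff the CB-VF
corresponding to `h` and `α` is time-invariant, i.e.
`β_α (h x) T = sup_{(u,ξ)} min_{t ∈ [0,T]} β_α (h (ξ t)) (T - t)` for all `x` and `T ≥ 0`. -/
theorem isViscosityCBF_iff_cbvf_time_invariant {n m : ℕ}
    (f : (Fin n → ℝ) → (Fin m → ℝ) → Fin n → ℝ) (U : Set (Fin m → ℝ))
    (hU : IsCompact U) (hUne : U.Nonempty)
    (hf : ∃ K : NNReal, LipschitzOnWith K (Function.uncurry f) (Set.univ ×ˢ U))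
    (α : ℝ → ℝ) (hα : IsLocallyLipschitzClassK α)
    (β : ℝ → ℝ → ℝ) (hβ : IsBetaFor α β)
    (h : (Fin n → ℝ) → ℝ) (hh : Continuous h) (hh0 : ∀ x, 0 ≤ h x) :
    IsViscosityCBF f U α h ↔
      ∀ x : Fin n → ℝ, ∀ T : ℝ, 0 ≤ T → β (h x) T = cbvfPayoff f U β h x T := by
  obtain ⟨K₀, hK₀⟩ := hf
  have hf' : ∃ K : NNReal, LipschitzOnWith K (Function.uncurry f) (Set.univ ×ˢ U) := ⟨K₀, hK₀⟩
  have hαK := hα.1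
  set K : ℝ := max K₀ 1 with hKdef
  have hK1 : 1 ≤ K := le_max_right _ _
  have hK : ∀ y z, ∀ v ∈ U, ‖f y v - f z v‖ ≤ K * ‖y - z‖ := by
    intro y z v hv
    have h1 := hK₀.dist_le_mul (y, v) ⟨trivial, hv⟩ (z, v) ⟨trivial, hv⟩
    rw [Prod.dist_eq, dist_self, max_eq_left dist_nonneg, dist_eq_norm, dist_eq_norm] at h1
    exact h1.trans (mul_le_mul_of_nonneg_right (le_max_left _ _) (norm_nonneg _))
  have hfc : ∀ x, ContinuousOn (fun v => f x v) U := by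
    intro x
    exact hK₀.continuousOn.comp (f := fun v => (x, v)) (by fun_prop) (fun v hv => ⟨trivial, hv⟩)
  have hFex : ∀ x, ∃ F : ℝ, 0 ≤ F ∧ ∀ v ∈ U, ‖f x v‖ ≤ F := by
    intro x
    obtain ⟨F, hF⟩ := hU.exists_bound_of_continuousOn (hfc x)
    obtain ⟨v, hv⟩ := hUne
    exact ⟨F, (norm_nonneg _).trans (hF v hv), hF⟩
  have hbelow : ∀ (T : ℝ) (ξ : ℝ → Fin n → ℝ),
      BddBelow ((fun t => β (h (ξ t)) (T - t)) '' Set.Icc 0 T) := by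
    intro T ξ
    refine ⟨0, ?_⟩
    rintro _ ⟨t, ht, rfl⟩
    exact ((hβ _ (hh0 _)).2 _ (sub_nonneg.2 ht.2)).1
  constructor
  · intro hcbf x T hT
    obtain ⟨F, _, hF⟩ := hFex x
    have hup : ∀ y ∈ {y : ℝ | ∃ u ξ, IsControl U u ∧ IsTrajectory f x u ξ ∧
        y = sInf ((fun t => β (h (ξ t)) (T - t)) '' Set.Icc 0 T)}, y ≤ β (h x) T := by
      rintro _ ⟨u, ξ, _, hξ, rfl⟩
      refine (csInf_le (hbelow T ξ) ⟨0, ⟨le_rfl, hT⟩, rfl⟩).trans ?_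
      have : ξ 0 = x := by simpa using hξ.2 0 le_rfl
      simp [this]
    have hlow : ∀ e > 0, ∃ y ∈ {y : ℝ | ∃ u ξ, IsControl U u ∧ IsTrajectory f x u ξ ∧
        y = sInf ((fun t => β (h (ξ t)) (T - t)) '' Set.Icc 0 T)}, β (h x) T - e ≤ y := by
      intro e he
      obtain ⟨u, ξ, hu, hξ, hb⟩ := cbf_forward hUne hf' hαK hβ hh0 hcbf hK1 hK hF
        (T := T + 1) (by linarith) he
      refine ⟨_, ⟨u, ξ, hu, hξ, rfl⟩, ?_⟩
      apply le_csInf ((Set.nonempty_Icc.2 hT).image _)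
      rintro _ ⟨t, ht, rfl⟩
      have h1 := cbf_beta_lower hαK hβ (hh0 (ξ t)) ((hβ _ (hh0 x)).2 t ht.1).1 he.le
        (hb t ⟨ht.1, by linarith [ht.2]⟩) (sub_nonneg.2 ht.2)
      rw [cbf_beta_shift hαK hβ (hh0 x) ht.1 (sub_nonneg.2 ht.2), add_sub_cancel] at h1
      exact h1
    unfold cbvfPayoff
    apply le_antisymm
    · apply le_of_forall_pos_le_add
      intro e he
      obtain ⟨y, hy, hle⟩ := hlow e he
      have := le_csSup ⟨_, hup⟩ hy
      linarith
    · obtain ⟨y, hy, _⟩ := hlow 1 one_pos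
      exact csSup_le ⟨y, hy⟩ hup
  · intro hinv
    refine ⟨hh, fun x _ φ hφ hmax => ?_⟩
    obtain ⟨F, hF0, hF⟩ := hFex x
    refine cbf_backward hU hf' hαK hβ hh0 hK1 hK hF hF0 (hfc x) ?_ hφ hmax
    intro T e hT he
    have h1 := hinv x T hT.le
    have hne : {y : ℝ | ∃ u ξ, IsControl U u ∧ IsTrajectory f x u ξ ∧
        y = sInf ((fun t => β (h (ξ t)) (T - t)) '' Set.Icc 0 T)}.Nonempty := by
      obtain ⟨v₀, hv₀⟩ := hUne
      have hτK : K * (1 / (2 * K)) ≤ 1 / 2 := le_of_eq (by field_simp)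
      choose η hηc hη0 hη using fun z =>
        cbf_local_sol (zero_le_one.trans hK1) hK (by positivity) hτK hv₀ z
      obtain ⟨u, ξ, _, hu, hξ, _⟩ := cbf_concat hf' hK hF (by positivity) (fun _ => v₀)
        (fun _ => hv₀) η hηc hη0 hη
      exact ⟨_, u, ξ, hu, hξ, rfl⟩
    unfold cbvfPayoff at h1
    obtain ⟨_, ⟨u, ξ, hu, hξ, rfl⟩, hlt⟩ := exists_lt_of_lt_csSup hne
      (show β (h x) T - e < _ by rw [← h1]; linarith)
    refine ⟨u, ξ, hu, hξ, hlt.trans_le ?_⟩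
    refine (csInf_le (hbelow T ξ) ⟨T, ⟨hT.le, le_rfl⟩, rfl⟩).trans ?_
    simp [(hβ _ (hh0 (ξ T))).1]
end
end
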